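/- arXiv:2602.08173 — 2 statements merged into one kernel-verified Lean document; each statement's English description precedes it below -/
import Mathlib

section
/- With the correlated Rademacher vectors x, x′, x_1,…,x_L, x′_1,…,x′_L and the correlated Gaussian variables U, V_1,…,V_L as in the context, for all nonnegative reals a, b_1, …, b_L one has the inequality of extended-real-valued integrals E[exp(a·(⟨x,x′⟩/√n)² + Σ_{ℓ=1}^L (b_ℓ/2)·(⟨x_ℓ,x′_ℓ⟩/√n)²)] ≤ E[exp(a·U² + Σ_{ℓ=1}^L (b_ℓ/2)·V_ℓ²)], where both sides take values in [0,∞]. -/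
/-!
The exponent is a polynomial with nonnegative coefficients in the correlated variables, so after
expanding the exponential it suffices to compare mixed moments (`MomentDom.lintegral_exp_le`).
Domination of all mixed moments is transitive and is preserved by polynomial maps with nonnegative
coefficients (`MomentDom.comp`), which are modelled by `MvPolynomial _ NNReal`.

The comparison goes through a vector built from independent uniform signs `u i`, `w ℓ i`. Put
`r = ρ ^ 2` and `c = √(1 - ρ ^ 4)`, so that `r ^ 2 + c ^ 2 = 1`.

* `radVec_dom_signVec`: coordinate by coordinate, the products `x i * x' i` and
  `x_ℓ i * x'_ℓ i` are dominated by `u i` and `r * u i + c * w ℓ i`. Conditionally on `u i`, this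
  amounts to the inequality `E (r + c w) ^ q ≥ 1` for even `q` and `≥ r` for odd `q`, which follows
  from Bernoulli's inequality (`sign_moment_lower`).
* `signSum_dom_gauss`: the normalized sums over `i` of the signs `u` and `w ℓ` are dominated by
  independent standard Gaussians. A single sign is dominated by a Gaussian
  (`rad_moment_le_gaussian_moment`), and normalized sums of independent Gaussians are Gaussian.

Summing over `i` in the first comparison, and applying the linear map `(U, W) ↦ (U, r U + c W)` in
the second, makes the two intermediate vectors agree.
-/

open MeasureTheory ProbabilityTheory

/-- The Rademacher-type measure on `ℝ` putting mass `p` at `1` and `1-p` at `-1`. -/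
noncomputable def radMeasure (p : ℝ) : Measure ℝ :=
  ENNReal.ofReal p • Measure.dirac 1 + ENNReal.ofReal (1 - p) • Measure.dirac (-1)

/-- Joint law of `(x, x')` (uniform signs) and `(z_1,…,z_L)`, `(z'_1,…,z'_L)`
(independent signs with success probability `(1+ρ)/2` per coordinate). -/
noncomputable def radSpace (n L : ℕ) (ρ : ℝ) :
    Measure (((Fin n → ℝ) × (Fin n → ℝ)) ×
      ((Fin L → Fin n → ℝ) × (Fin L → Fin n → ℝ))) :=
  ((Measure.pi fun _ : Fin n => radMeasure (1 / 2)).prod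
      (Measure.pi fun _ : Fin n => radMeasure (1 / 2))).prod
    ((Measure.pi fun _ : Fin L => Measure.pi fun _ : Fin n => radMeasure ((1 + ρ) / 2)).prod
      (Measure.pi fun _ : Fin L => Measure.pi fun _ : Fin n => radMeasure ((1 + ρ) / 2)))

/-- The `(L+1)`-fold product of standard Gaussian measures; coordinate `0` is `U`
and coordinate `ℓ.succ` is `W_ℓ`. -/
noncomputable def gaussSpace (L : ℕ) : Measure (Fin (L + 1) → ℝ) :=
  Measure.pi fun _ => gaussianReal 0 1

/-! ### Moment domination -/

/-- Moment domination of the random vector `X` on `(Ω, μ)` by the random vector `Y` on `(Ω', ν)`: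
all mixed moments of both vectors exist, and each mixed moment of `X` is at most the
corresponding one of `Y`. -/
structure MomentDom {Ω Ω' σ : Type*} [MeasurableSpace Ω] [MeasurableSpace Ω'] [Fintype σ]
    (μ : Measure Ω) (X : Ω → σ → ℝ) (ν : Measure Ω') (Y : Ω' → σ → ℝ) : Prop where
  int_left : ∀ m : σ → ℕ, Integrable (fun ω => ∏ s, X ω s ^ m s) μ
  int_right : ∀ m : σ → ℕ, Integrable (fun ω => ∏ s, Y ω s ^ m s) ν
  le : ∀ m : σ → ℕ, ∫ ω, ∏ s, X ω s ^ m s ∂μ ≤ ∫ ω, ∏ s, Y ω s ^ m s ∂ν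

section MomentDom

variable {Ω Ω' σ τ : Type*} [MeasurableSpace Ω] [MeasurableSpace Ω'] [Fintype σ] [Fintype τ]
  {μ : Measure Ω} {X : Ω → σ → ℝ} {ν : Measure Ω'} {Y : Ω' → σ → ℝ}

lemma aeval_eq_sum_monomials (x : σ → ℝ) (P : MvPolynomial σ NNReal) :
    MvPolynomial.aeval x P = ∑ d ∈ P.support, ((P.coeff d : NNReal) : ℝ) * ∏ s, x s ^ d s := by
  rw [MvPolynomial.aeval_def, MvPolynomial.eval₂_eq']
  rfl

lemma integrable_aeval (h : ∀ m : σ → ℕ, Integrable (fun ω => ∏ s, X ω s ^ m s) μ)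
    (P : MvPolynomial σ NNReal) : Integrable (fun ω => MvPolynomial.aeval (X ω) P) μ := by
  simp_rw [aeval_eq_sum_monomials]
  exact integrable_finsetSum _ fun d _ => (h d).const_mul _

lemma MomentDom.integral_aeval_le (h : MomentDom μ X ν Y) (P : MvPolynomial σ NNReal) :
    ∫ ω, MvPolynomial.aeval (X ω) P ∂μ ≤ ∫ ω, MvPolynomial.aeval (Y ω) P ∂ν := by
  simp_rw [aeval_eq_sum_monomials]
  rw [integral_finsetSum _ fun (d : σ →₀ ℕ) _ => (h.int_left d).const_mul _,
    integral_finsetSum _ fun (d : σ →₀ ℕ) _ => (h.int_right d).const_mul _]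
  refine Finset.sum_le_sum fun d _ => ?_
  rw [integral_const_mul, integral_const_mul]
  exact mul_le_mul_of_nonneg_left (h.le d) (P.coeff d).2

/-- Moment domination is preserved by polynomial maps with nonnegative coefficients. -/
lemma MomentDom.comp (h : MomentDom μ X ν Y) (p : τ → MvPolynomial σ NNReal) :
    MomentDom μ (fun ω t => MvPolynomial.aeval (X ω) (p t))
      ν (fun ω t => MvPolynomial.aeval (Y ω) (p t)) := by
  have key : ∀ (x : σ → ℝ) (m : τ → ℕ), ∏ t, MvPolynomial.aeval x (p t) ^ m t =
      MvPolynomial.aeval x (∏ t, p t ^ m t) := by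
    intro x m
    simp
  refine ⟨fun m => ?_, fun m => ?_, fun m => ?_⟩ <;> simp_rw [key]
  · exact integrable_aeval h.int_left _
  · exact integrable_aeval h.int_right _
  · exact h.integral_aeval_le _

lemma MomentDom.trans {Ω'' : Type*} [MeasurableSpace Ω''] {κ : Measure Ω''} {Z : Ω'' → σ → ℝ}
    (h : MomentDom μ X ν Y) (h' : MomentDom ν Y κ Z) : MomentDom μ X κ Z :=
  ⟨h.int_left, h'.int_right, fun m => (h.le m).trans (h'.le m)⟩

/-- The exponential series, integrated term by term. -/
lemma lintegral_exp_eq_tsum {q : Ω → ℝ} (hq : ∀ ω, 0 ≤ q ω)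
    (hlin : ∀ k : ℕ, Integrable (fun ω => q ω ^ k) μ) :
    ∫⁻ ω, ENNReal.ofReal (Real.exp (q ω)) ∂μ =
      ∑' k : ℕ, ENNReal.ofReal ((∫ ω, q ω ^ k ∂μ) / (k.factorial : ℝ)) := by
  have h1 : ∀ ω, ENNReal.ofReal (Real.exp (q ω)) =
      ∑' k : ℕ, ENNReal.ofReal (q ω ^ k / (k.factorial : ℝ)) := by
    intro ω
    have hs := NormedSpace.expSeries_div_hasSum_exp (q ω)
    rw [← Real.exp_eq_exp_ℝ] at hs
    rw [← hs.tsum_eq]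
    refine ENNReal.ofReal_tsum_of_nonneg (fun k => ?_) hs.summable
    have := hq ω
    positivity
  simp_rw [h1]
  rw [lintegral_tsum fun k => ((hlin k).div_const _).aemeasurable.ennreal_ofReal]
  refine tsum_congr fun k => ?_
  rw [← integral_div, ofReal_integral_eq_lintegral_ofReal ((hlin k).div_const _)]
  exact Filter.Eventually.of_forall fun ω => by
    have := hq ω
    show 0 ≤ q ω ^ k / (k.factorial : ℝ)
    positivity

/-- Moment domination gives comparison of exponential moments of a pointwise nonnegative polynomial
with nonnegative coefficients: compare the exponential series term by term. -/
lemma MomentDom.lintegral_exp_le (h : MomentDom μ X ν Y) (Q : MvPolynomial σ NNReal)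
    (hQ : ∀ x : σ → ℝ, 0 ≤ MvPolynomial.aeval x Q) :
    ∫⁻ ω, ENNReal.ofReal (Real.exp (MvPolynomial.aeval (X ω) Q)) ∂μ ≤
      ∫⁻ ω, ENNReal.ofReal (Real.exp (MvPolynomial.aeval (Y ω) Q)) ∂ν := by
  rw [lintegral_exp_eq_tsum (fun ω => hQ _) fun k => ?_,
    lintegral_exp_eq_tsum (fun ω => hQ _) fun k => ?_]
  · refine ENNReal.tsum_le_tsum fun k => ENNReal.ofReal_le_ofReal ?_
    refine div_le_div_of_nonneg_right ?_ (by positivity)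
    simp_rw [← map_pow]
    exact h.integral_aeval_le _
  · simp_rw [← map_pow]
    exact integrable_aeval h.int_right _
  · simp_rw [← map_pow]
    exact integrable_aeval h.int_left _

end MomentDom

/-! ### Moments of the one-dimensional laws -/

instance isFiniteMeasure_radMeasure (p : ℝ) : IsFiniteMeasure (radMeasure p) := by
  constructor
  simp [radMeasure]

lemma integrable_radMeasure (p : ℝ) (f : ℝ → ℝ) : Integrable f (radMeasure p) :=
  ((integrable_dirac (by simp)).smul_measure (by simp)).add_measure
    ((integrable_dirac (by simp)).smul_measure (by simp))

lemma integral_radMeasure {p : ℝ} (h0 : 0 ≤ p) (h1 : p ≤ 1) (f : ℝ → ℝ) :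
    ∫ x, f x ∂radMeasure p = p * f 1 + (1 - p) * f (-1) := by
  rw [radMeasure, integral_add_measure ((integrable_dirac (by simp)).smul_measure (by simp))
    ((integrable_dirac (by simp)).smul_measure (by simp))]
  simp [integral_smul_measure, ENNReal.toReal_ofReal h0, ENNReal.toReal_ofReal (sub_nonneg.2 h1)]

lemma integral_rad_half (f : ℝ → ℝ) :
    ∫ x, f x ∂radMeasure (1 / 2) = (f 1 + f (-1)) / 2 := by
  rw [integral_radMeasure (by norm_num) (by norm_num)]
  ring

lemma integral_rad_half_pow (m : ℕ) :
    ∫ x, x ^ m ∂radMeasure (1 / 2) = if Even m then 1 else 0 := by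
  rw [integral_rad_half]
  split_ifs with h
  · simp [h.neg_one_pow]
  · simp [(Nat.not_even_iff_odd.1 h).neg_one_pow]

lemma integral_rad_bias_pow {ρ : ℝ} (h0 : 0 ≤ ρ) (h1 : ρ ≤ 1) (m : ℕ) :
    ∫ x, x ^ m ∂radMeasure ((1 + ρ) / 2) = if Even m then 1 else ρ := by
  rw [integral_radMeasure (by linarith) (by linarith)]
  split_ifs with h
  · simp [h.neg_one_pow]
  · simp only [one_pow, (Nat.not_even_iff_odd.1 h).neg_one_pow]
    ring

lemma integrable_pow_gaussian (m : ℕ) : Integrable (fun x : ℝ => x ^ m) (gaussianReal 0 1) := by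
  have := (memLp_id_gaussianReal (μ := 0) (v := 1) (m : NNReal)).integrable_norm_pow'
  refine (integrable_norm_iff (by fun_prop)).1 ?_
  simpa using this

/-- The even moments of the standard Gaussian are at least `1`, the odd ones vanish. The former is
Bernoulli's inequality `x ^ (2 * k) ≥ 1 + k * (x ^ 2 - 1)`, integrated. -/
lemma rad_moment_le_gaussian_moment (m : ℕ) :
    ∫ x, x ^ m ∂radMeasure (1 / 2) ≤ ∫ x, x ^ m ∂gaussianReal 0 1 := by
  rw [integral_rad_half_pow]
  split_ifs with h
  · obtain ⟨k, rfl⟩ := h.two_dvd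
    have hvar : ∫ x : ℝ, x ^ 2 ∂gaussianReal 0 1 = 1 := by
      have := variance_fun_id_gaussianReal (μ := 0) (v := 1)
      rw [variance_eq_integral (by fun_prop)] at this
      simpa using this
    have hlin' : Integrable (fun x : ℝ => (k : ℝ) * (x ^ 2 - 1)) (gaussianReal 0 1) :=
      ((integrable_pow_gaussian 2).sub (integrable_const _)).const_mul _
    have hlin : Integrable (fun x : ℝ => 1 + (k : ℝ) * (x ^ 2 - 1)) (gaussianReal 0 1) :=
      (integrable_const _).add hlin'
    calc (1 : ℝ) = ∫ x : ℝ, 1 + (k : ℝ) * (x ^ 2 - 1) ∂gaussianReal 0 1 := by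
          rw [integral_add (integrable_const _) hlin', integral_const_mul,
            integral_sub (integrable_pow_gaussian 2) (integrable_const _), hvar]
          simp
      _ ≤ _ := by
          refine integral_mono hlin (integrable_pow_gaussian _) fun x => ?_
          have := one_add_mul_le_pow (a := x ^ 2 - 1) (by nlinarith [sq_nonneg x]) k
          simpa [pow_mul] using this
  · have hodd := Nat.not_even_iff_odd.1 h
    have hneg : ∫ x : ℝ, x ^ m ∂gaussianReal 0 1 = -∫ x : ℝ, x ^ m ∂gaussianReal 0 1 := by
      have hmap := gaussianReal_map_neg (μ := 0) (v := 1)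
      rw [neg_zero] at hmap
      conv_lhs => rw [← hmap]
      rw [integral_map (by fun_prop) (by fun_prop), ← integral_neg]
      simp_rw [hodd.neg_pow]
    linarith

/-- The normalized sum of `n` independent standard Gaussians is a standard Gaussian. -/
lemma map_normalized_sum_gaussian {n : ℕ} (hn : 1 ≤ n) :
    (Measure.pi fun _ : Fin n => gaussianReal 0 1).map (fun x => ∑ i, (√n)⁻¹ * x i) =
      gaussianReal 0 1 := by
  have hn' : (0 : ℝ) < n := by exact_mod_cast hn
  refine Measure.ext_of_charFun ?_
  ext t
  rw [charFun_apply_real, integral_map (Continuous.aemeasurable (by fun_prop)) (by fun_prop)]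
  have h1 : ∀ x : Fin n → ℝ, Complex.exp (t * ((∑ i, (√n)⁻¹ * x i : ℝ) : ℂ) * Complex.I) =
      ∏ i, Complex.exp (((t * (√n)⁻¹ : ℝ) : ℂ) * (x i : ℂ) * Complex.I) := by
    intro x
    rw [← Complex.exp_sum]
    congr 1
    push_cast
    rw [Finset.mul_sum, Finset.sum_mul]
    exact Finset.sum_congr rfl fun i _ => by ring
  simp_rw [h1]
  rw [integral_fintype_prod_eq_prod
    (f := fun _ (y : ℝ) => Complex.exp (((t * (√n)⁻¹ : ℝ) : ℂ) * (y : ℂ) * Complex.I))]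
  simp_rw [← charFun_apply_real, charFun_gaussianReal]
  rw [Finset.prod_const, Finset.card_univ, Fintype.card_fin, ← Complex.exp_nat_mul]
  congr 1
  have hs : ((√n : ℝ) : ℂ) ^ 2 = n := by
    rw [← Complex.ofReal_pow, Real.sq_sqrt hn'.le]
    simp
  have hne : (n : ℂ) ≠ 0 := by exact_mod_cast hn'.ne'
  push_cast
  rw [mul_pow, inv_pow, hs]
  field_simp
  simp

/-- Moments of a normalized sum of independent uniform signs are nonnegative and at most the
standard Gaussian ones. -/
lemma rad_sum_moment {n : ℕ} (hn : 1 ≤ n) (m : ℕ) :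
    Integrable (fun u : Fin n → ℝ => (∑ i, (√n)⁻¹ * u i) ^ m)
        (Measure.pi fun _ : Fin n => radMeasure (1 / 2)) ∧
      0 ≤ ∫ u : Fin n → ℝ, (∑ i, (√n)⁻¹ * u i) ^ m
        ∂(Measure.pi fun _ : Fin n => radMeasure (1 / 2)) ∧
      ∫ u : Fin n → ℝ, (∑ i, (√n)⁻¹ * u i) ^ m
        ∂(Measure.pi fun _ : Fin n => radMeasure (1 / 2)) ≤ ∫ x, x ^ m ∂gaussianReal 0 1 := by
  have hmom : ∀ m : ℕ, 0 ≤ ∫ x, x ^ m ∂radMeasure (1 / 2) := fun m => by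
    rw [integral_rad_half_pow]
    split_ifs <;> simp
  have hmon : ∀ m : Fin n → ℕ, 0 ≤ ∫ u : Fin n → ℝ, ∏ i, u i ^ m i
      ∂(Measure.pi fun _ : Fin n => radMeasure (1 / 2)) := fun m => by
    rw [integral_fintype_prod_eq_prod (f := fun i (y : ℝ) => y ^ m i)]
    exact Finset.prod_nonneg fun i _ => hmom _
  have hdom : MomentDom (Measure.pi fun _ : Fin n => radMeasure (1 / 2)) (fun u => u)
      (Measure.pi fun _ : Fin n => gaussianReal 0 1) (fun u => u) := by
    refine ⟨fun m => ?_, fun m => ?_, fun m => ?_⟩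
    · exact Integrable.fintype_prod fun i => integrable_radMeasure _ _
    · exact Integrable.fintype_prod (f := fun i (y : ℝ) => y ^ m i)
        fun i => integrable_pow_gaussian _
    · rw [integral_fintype_prod_eq_prod (f := fun i (y : ℝ) => y ^ m i),
        integral_fintype_prod_eq_prod (f := fun i (y : ℝ) => y ^ m i)]
      exact Finset.prod_le_prod (fun i _ => hmom _) fun i _ => rad_moment_le_gaussian_moment _
  set P : MvPolynomial (Fin n) NNReal :=
    (∑ i, MvPolynomial.C (NNReal.sqrt n)⁻¹ * MvPolynomial.X i) ^ m with hP
  have hPe : ∀ u : Fin n → ℝ, (∑ i, (√n)⁻¹ * u i) ^ m = MvPolynomial.aeval u P := by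
    intro u
    simp [hP, NNReal.algebraMap_eq_coe]
  refine ⟨?_, ?_, ?_⟩
  · simp_rw [hPe]
    exact integrable_aeval hdom.int_left P
  · simp_rw [hPe, aeval_eq_sum_monomials]
    rw [integral_finsetSum _ fun (d : Fin n →₀ ℕ) _ => (hdom.int_left d).const_mul _]
    refine Finset.sum_nonneg fun d _ => ?_
    rw [integral_const_mul]
    exact mul_nonneg (P.coeff d).2 (hmon d)
  · rw [← map_normalized_sum_gaussian hn,
      integral_map (Continuous.aemeasurable (by fun_prop)) (by fun_prop)]
    simp_rw [hPe]
    exact hdom.integral_aeval_le P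

/-! ### The intermediate vector of sums of signs -/

/-- Law of independent uniform signs `u i` and `w ℓ i`; the latter stand in for the `n` summands
of the Gaussian variable `W_ℓ`. -/
noncomputable def signSpace (n L : ℕ) : Measure ((Fin n → ℝ) × (Fin L → Fin n → ℝ)) :=
  (Measure.pi fun _ : Fin n => radMeasure (1 / 2)).prod
    (Measure.pi fun _ : Fin L => Measure.pi fun _ : Fin n => radMeasure (1 / 2))

/-- By independence this reduces to `rad_sum_moment` in each of the `L + 1` components. -/
lemma signSum_dom_gauss {n : ℕ} (hn : 1 ≤ n) (L : ℕ) :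
    MomentDom (signSpace n L)
      (fun ω => (Fin.cons (∑ i, (√n)⁻¹ * ω.1 i) (fun ℓ => ∑ i, (√n)⁻¹ * ω.2 ℓ i) :
        Fin (L + 1) → ℝ))
      (gaussSpace L) (fun g => g) := by
  refine ⟨fun m => ?_, fun m => ?_, fun m => ?_⟩
  · simp_rw [Fin.prod_univ_succ, Fin.cons_zero, Fin.cons_succ]
    refine Integrable.mul_prod (f := fun u : Fin n → ℝ => (∑ i, (√n)⁻¹ * u i) ^ m 0)
      (g := fun w : Fin L → Fin n → ℝ => ∏ ℓ, (∑ i, (√n)⁻¹ * w ℓ i) ^ m ℓ.succ)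
      (rad_sum_moment hn _).1 ?_
    exact Integrable.fintype_prod
      (f := fun (ℓ : Fin L) (v : Fin n → ℝ) => (∑ i, (√n)⁻¹ * v i) ^ m ℓ.succ)
      fun ℓ => (rad_sum_moment hn _).1
  · exact Integrable.fintype_prod (f := fun i (y : ℝ) => y ^ m i)
      fun i => integrable_pow_gaussian _
  · simp_rw [gaussSpace]
    rw [integral_fintype_prod_eq_prod (f := fun i (y : ℝ) => y ^ m i)]
    simp_rw [Fin.prod_univ_succ, Fin.cons_zero, Fin.cons_succ]
    rw [signSpace, integral_prod_mul (fun u : Fin n → ℝ => (∑ i, (√n)⁻¹ * u i) ^ m 0)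
      (fun w : Fin L → Fin n → ℝ => ∏ ℓ, (∑ i, (√n)⁻¹ * w ℓ i) ^ m ℓ.succ),
      integral_fintype_prod_eq_prod
        (f := fun (ℓ : Fin L) (v : Fin n → ℝ) => (∑ i, (√n)⁻¹ * v i) ^ m ℓ.succ)]
    have h := fun k => (rad_sum_moment hn k).2
    exact mul_le_mul (h _).2 (Finset.prod_le_prod (fun ℓ _ => (h _).1) fun ℓ _ => (h _).2)
      (Finset.prod_nonneg fun ℓ _ => (h _).1) ((h _).1.trans (h _).2)

/-- With `t = 2 r c` and `r² + c² = 1`, one has `(r ± c)² = 1 ± t`, and Bernoulli's inequality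
bounds the mean of `(1 + t)^k` and `(1 - t)^k` below by `1`. -/
lemma sign_moment_lower {r c : ℝ} (hr : 0 ≤ r) (hc : 0 ≤ c) (hrc : r ^ 2 + c ^ 2 = 1) (q : ℕ) :
    (if Even q then 1 else r) ≤ ((r + c) ^ q + (r - c) ^ q) / 2 := by
  have ht0 : 0 ≤ 2 * r * c := by positivity
  have ht1 : 2 * r * c ≤ 1 := by nlinarith [sq_nonneg (r - c)]
  have hp : (r + c) ^ 2 = 1 + 2 * r * c := by linear_combination hrc
  have hm : (r - c) ^ 2 = 1 + -(2 * r * c) := by linear_combination hrc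
  have hb : ∀ k : ℕ, 1 ≤ ((1 + 2 * r * c) ^ k + (1 + -(2 * r * c)) ^ k) / 2 := fun k => by
    have h1 := one_add_mul_le_pow (a := 2 * r * c) (by linarith) k
    have h2 := one_add_mul_le_pow (a := -(2 * r * c)) (by linarith) k
    linarith
  split_ifs with h
  · obtain ⟨k, rfl⟩ := h.two_dvd
    rw [pow_mul, pow_mul, hp, hm]
    exact hb k
  · obtain ⟨k, rfl⟩ := Nat.not_even_iff_odd.1 h
    rw [pow_succ, pow_succ, pow_mul, pow_mul, hp, hm]
    have hd : (1 + -(2 * r * c)) ^ k ≤ (1 + 2 * r * c) ^ k :=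
      pow_le_pow_left₀ (by linarith) (by linarith) k
    nlinarith [mul_le_mul_of_nonneg_left (hb k) hr, mul_nonneg hc (sub_nonneg.2 hd)]

/-- The unnormalized sign vector with entries `u i` and `r * u i + c * w ℓ i`, a discrete
counterpart of `U` and `V_ℓ`. -/
def signVec (n L : ℕ) (r c : ℝ) (ω : (Fin n → ℝ) × (Fin L → Fin n → ℝ)) :
    Fin n × Fin (L + 1) → ℝ :=
  fun p => (Fin.cons (ω.1 p.1) (fun ℓ => r * ω.1 p.1 + c * ω.2 ℓ p.1) : Fin (L + 1) → ℝ) p.2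

lemma integrable_signVec (n L : ℕ) (r c : NNReal) (m : Fin n × Fin (L + 1) → ℕ) :
    Integrable (fun ω => ∏ p, signVec n L r c ω p ^ m p) (signSpace n L) := by
  -- All monomials in the raw signs are integrable, and `signVec` is polynomial in these.
  have hbase : ∀ k : Fin n ⊕ (Fin L × Fin n) → ℕ,
      Integrable (fun ω : (Fin n → ℝ) × (Fin L → Fin n → ℝ) =>
        ∏ s, (Sum.elim ω.1 (fun p => ω.2 p.1 p.2) : Fin n ⊕ (Fin L × Fin n) → ℝ) s ^ k s)
        (signSpace n L) := by
    intro k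
    simp only [Fintype.prod_sum_type, Sum.elim_inl, Sum.elim_inr, Fintype.prod_prod_type]
    refine Integrable.mul_prod (f := fun u : Fin n → ℝ => ∏ i, u i ^ k (Sum.inl i))
      (g := fun w : Fin L → Fin n → ℝ => ∏ ℓ, ∏ i, w ℓ i ^ k (Sum.inr (ℓ, i))) ?_ ?_
    · exact Integrable.fintype_prod fun i => integrable_radMeasure _ _
    · exact Integrable.fintype_prod
        (f := fun (ℓ : Fin L) (v : Fin n → ℝ) => ∏ i, v i ^ k (Sum.inr (ℓ, i)))
        fun ℓ => Integrable.fintype_prod fun i => integrable_radMeasure _ _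
  let p : Fin n × Fin (L + 1) → MvPolynomial (Fin n ⊕ (Fin L × Fin n)) NNReal := fun a =>
    (Fin.cons (MvPolynomial.X (Sum.inl a.1))
      (fun ℓ => MvPolynomial.C r * MvPolynomial.X (Sum.inl a.1) +
        MvPolynomial.C c * MvPolynomial.X (Sum.inr (ℓ, a.1))) :
      Fin (L + 1) → MvPolynomial (Fin n ⊕ (Fin L × Fin n)) NNReal) a.2
  have hp : ∀ ω a, signVec n L r c ω a = MvPolynomial.aeval
      (Sum.elim ω.1 (fun p => ω.2 p.1 p.2) : Fin n ⊕ (Fin L × Fin n) → ℝ) (p a) := by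
    rintro ω ⟨i, s⟩
    refine Fin.cases ?_ (fun ℓ => ?_) s
    · simp [signVec, p]
    · simp [signVec, p, NNReal.algebraMap_eq_coe]
  simp_rw [hp, ← map_pow, ← map_prod]
  exact integrable_aeval hbase _

/-- Integrating first over `w` with `u` fixed leaves a product over `i` of functions of `u i`, whose
values at `±1` differ by the sign given by the parity of the total degree at `i`. -/
lemma integral_signVec (n L : ℕ) (r c : NNReal) (m : Fin n × Fin (L + 1) → ℕ) :
    ∫ ω, ∏ p, signVec n L r c ω p ^ m p ∂signSpace n L =
      ∏ i, ((if Even (∑ s, m (i, s)) then 1 else 0) *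
        ∏ ℓ : Fin L, (((r : ℝ) + c) ^ m (i, ℓ.succ) + ((r : ℝ) - c) ^ m (i, ℓ.succ)) / 2) := by
  have h := integrable_signVec n L r c m
  rw [signSpace] at h ⊢
  rw [integral_prod _ h]
  have hinner : ∀ u : Fin n → ℝ, ∫ w : Fin L → Fin n → ℝ, ∏ p, signVec n L r c (u, w) p ^ m p
      ∂(Measure.pi fun _ : Fin L => Measure.pi fun _ : Fin n => radMeasure (1 / 2)) =
      ∏ i, (u i ^ m (i, 0) * ∏ ℓ : Fin L,
        ((r * u i + c) ^ m (i, ℓ.succ) + (r * u i - c) ^ m (i, ℓ.succ)) / 2) := by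
    intro u
    simp only [signVec, Fintype.prod_prod_type, Fin.prod_univ_succ, Fin.cons_zero, Fin.cons_succ,
      Finset.prod_mul_distrib]
    rw [integral_const_mul]
    congr 1
    simp_rw [Finset.prod_comm (s := (Finset.univ : Finset (Fin n)))]
    rw [integral_fintype_prod_eq_prod
      (f := fun (ℓ : Fin L) (v : Fin n → ℝ) => ∏ i, (r * u i + c * v i) ^ m (i, ℓ.succ))]
    refine Finset.prod_congr rfl fun ℓ _ => ?_
    rw [integral_fintype_prod_eq_prod
      (f := fun i (y : ℝ) => (r * u i + c * y) ^ m (i, ℓ.succ))]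
    refine Finset.prod_congr rfl fun i _ => ?_
    rw [integral_rad_half]
    simp [sub_eq_add_neg]
  simp_rw [hinner]
  rw [integral_fintype_prod_eq_prod (f := fun i (y : ℝ) => y ^ m (i, 0) * ∏ ℓ : Fin L,
        ((r * y + c) ^ m (i, ℓ.succ) + (r * y - c) ^ m (i, ℓ.succ)) / 2)]
  refine Finset.prod_congr rfl fun i _ => ?_
  rw [integral_rad_half]
  -- Replacing `u = 1` by `u = -1` multiplies each factor by a power of `-1`.
  have hneg : ∀ q : ℕ, (((r : ℝ) * -1 + c) ^ q + ((r : ℝ) * -1 - c) ^ q) / 2 =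
      (-1) ^ q * ((((r : ℝ) + c) ^ q + ((r : ℝ) - c) ^ q) / 2) := by
    intro q
    rw [show (r : ℝ) * -1 + c = (-1) * (r - c) by ring,
      show (r : ℝ) * -1 - c = (-1) * (r + c) by ring, mul_pow, mul_pow]
    ring
  simp_rw [hneg, Finset.prod_mul_distrib, Finset.prod_pow_eq_pow_sum, mul_one, one_pow]
  rw [← mul_assoc, ← pow_add, ← Fin.sum_univ_succ (fun s => m (i, s)), ← add_mul,
    mul_div_right_comm]
  congr 1
  split_ifs with he
  · simp [he.neg_one_pow]
  · simp [(Nat.not_even_iff_odd.1 he).neg_one_pow]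

/-! ### Comparison with the correlated Rademacher vectors -/

/-- The unnormalized products `x i * x' i` and `x_ℓ i * x'_ℓ i`. -/
def radVec (n L : ℕ)
    (ω : ((Fin n → ℝ) × (Fin n → ℝ)) × ((Fin L → Fin n → ℝ) × (Fin L → Fin n → ℝ))) :
    Fin n × Fin (L + 1) → ℝ :=
  fun p => (Fin.cons (ω.1.1 p.1 * ω.1.2 p.1)
    (fun ℓ => (ω.1.1 p.1 * ω.2.1 ℓ p.1) * (ω.1.2 p.1 * ω.2.2 ℓ p.1)) : Fin (L + 1) → ℝ) p.2

lemma prod_radVec (n L : ℕ) (m : Fin n × Fin (L + 1) → ℕ)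
    (ω : ((Fin n → ℝ) × (Fin n → ℝ)) × ((Fin L → Fin n → ℝ) × (Fin L → Fin n → ℝ))) :
    ∏ p, radVec n L ω p ^ m p =
      ((∏ i, ω.1.1 i ^ (∑ s, m (i, s))) * (∏ i, ω.1.2 i ^ (∑ s, m (i, s)))) *
      ((∏ ℓ, ∏ i, ω.2.1 ℓ i ^ m (i, ℓ.succ)) * (∏ ℓ, ∏ i, ω.2.2 ℓ i ^ m (i, ℓ.succ))) := by
  have hc : ∀ f : Fin L → Fin n → ℝ, ∏ ℓ, ∏ i, f ℓ i = ∏ i, ∏ ℓ, f ℓ i := fun f =>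
    Finset.prod_comm
  rw [hc fun ℓ i => ω.2.1 ℓ i ^ m (i, ℓ.succ), hc fun ℓ i => ω.2.2 ℓ i ^ m (i, ℓ.succ),
    Fintype.prod_prod_type]
  simp only [← Finset.prod_mul_distrib]
  refine Finset.prod_congr rfl fun i _ => ?_
  simp only [radVec, Fin.prod_univ_succ, Fin.cons_zero, Fin.cons_succ,
    mul_pow, Finset.prod_mul_distrib, Fin.sum_univ_succ, pow_add, Finset.prod_pow_eq_pow_sum]
  ring

/-- Both mixed moments are products over the coordinates `i`. They vanish together by parity, and
otherwise each factor of the left side is `1` or `ρ ^ 2`, bounded by `sign_moment_lower`. -/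
lemma radVec_dom_signVec (n L : ℕ) {ρ : ℝ} (h0 : 0 ≤ ρ) (h1 : ρ ≤ 1) (r c : NNReal)
    (hr : (r : ℝ) = ρ ^ 2) (hrc : (r : ℝ) ^ 2 + (c : ℝ) ^ 2 = 1) :
    MomentDom (radSpace n L ρ) (radVec n L) (signSpace n L) (signVec n L r c) := by
  refine ⟨fun m => ?_, integrable_signVec n L r c, fun m => ?_⟩
  · simp_rw [prod_radVec]
    have hz : Integrable (fun z : Fin L → Fin n → ℝ => ∏ ℓ, ∏ i, z ℓ i ^ m (i, ℓ.succ))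
        (Measure.pi fun _ : Fin L => Measure.pi fun _ : Fin n => radMeasure ((1 + ρ) / 2)) :=
      Integrable.fintype_prod (f := fun (ℓ : Fin L) (v : Fin n → ℝ) => ∏ i, v i ^ m (i, ℓ.succ))
        fun ℓ => Integrable.fintype_prod fun i => integrable_radMeasure _ _
    have hx : Integrable (fun x : Fin n → ℝ => ∏ i, x i ^ (∑ s, m (i, s)))
        (Measure.pi fun _ : Fin n => radMeasure (1 / 2)) :=
      Integrable.fintype_prod fun i => integrable_radMeasure _ _
    exact (hx.mul_prod hx).mul_prod (hz.mul_prod hz)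
  · have hz : ∫ z : Fin L → Fin n → ℝ, ∏ ℓ, ∏ i, z ℓ i ^ m (i, ℓ.succ)
        ∂(Measure.pi fun _ : Fin L => Measure.pi fun _ : Fin n => radMeasure ((1 + ρ) / 2)) =
        ∏ ℓ : Fin L, ∏ i, if Even (m (i, ℓ.succ)) then 1 else ρ := by
      rw [integral_fintype_prod_eq_prod
        (f := fun (ℓ : Fin L) (v : Fin n → ℝ) => ∏ i, v i ^ m (i, ℓ.succ))]
      refine Finset.prod_congr rfl fun ℓ _ => ?_
      rw [integral_fintype_prod_eq_prod (f := fun i (y : ℝ) => y ^ m (i, ℓ.succ))]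
      exact Finset.prod_congr rfl fun i _ => integral_rad_bias_pow h0 h1 _
    have hx : ∫ x : Fin n → ℝ, ∏ i, x i ^ (∑ s, m (i, s))
        ∂(Measure.pi fun _ : Fin n => radMeasure (1 / 2)) =
        ∏ i, if Even (∑ s, m (i, s)) then 1 else 0 := by
      rw [integral_fintype_prod_eq_prod (f := fun i (y : ℝ) => y ^ (∑ s, m (i, s)))]
      exact Finset.prod_congr rfl fun i _ => integral_rad_half_pow _
    have hL : ∫ ω, ∏ p, radVec n L ω p ^ m p ∂radSpace n L ρ =
        ∏ i, ((if Even (∑ s, m (i, s)) then 1 else 0) *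
          ∏ ℓ : Fin L, if Even (m (i, ℓ.succ)) then 1 else (r : ℝ)) := by
      simp_rw [prod_radVec]
      rw [radSpace, integral_prod_mul
        (fun y : (Fin n → ℝ) × (Fin n → ℝ) =>
          (∏ i, y.1 i ^ (∑ s, m (i, s))) * (∏ i, y.2 i ^ (∑ s, m (i, s))))
        (fun y : (Fin L → Fin n → ℝ) × (Fin L → Fin n → ℝ) =>
          (∏ ℓ, ∏ i, y.1 ℓ i ^ m (i, ℓ.succ)) * (∏ ℓ, ∏ i, y.2 ℓ i ^ m (i, ℓ.succ))),
        integral_prod_mul (fun x : Fin n → ℝ => ∏ i, x i ^ (∑ s, m (i, s)))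
          (fun x : Fin n → ℝ => ∏ i, x i ^ (∑ s, m (i, s))),
        integral_prod_mul (fun z : Fin L → Fin n → ℝ => ∏ ℓ, ∏ i, z ℓ i ^ m (i, ℓ.succ))
          (fun z : Fin L → Fin n → ℝ => ∏ ℓ, ∏ i, z ℓ i ^ m (i, ℓ.succ)), hx, hz,
        Finset.prod_comm (s := (Finset.univ : Finset (Fin L)))]
      simp_rw [← Finset.prod_mul_distrib]
      refine Finset.prod_congr rfl fun i _ => ?_
      congr 1
      · split_ifs <;> simp
      · refine Finset.prod_congr rfl fun ℓ _ => ?_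
        split_ifs
        · simp
        · rw [hr, sq]
    rw [hL, integral_signVec]
    have hnn : ∀ q : ℕ, (0 : ℝ) ≤ if Even q then 1 else (r : ℝ) := fun q => by
      split_ifs
      · simp
      · exact r.2
    have hnn' : ∀ q : ℕ, (0 : ℝ) ≤ if Even q then 1 else 0 := fun q => by
      split_ifs <;> simp
    refine Finset.prod_le_prod
      (fun i _ => mul_nonneg (hnn' _) (Finset.prod_nonneg fun ℓ _ => hnn _)) fun i _ => ?_
    exact mul_le_mul_of_nonneg_left (Finset.prod_le_prod (fun ℓ _ => hnn _)
      fun ℓ _ => sign_moment_lower r.2 c.2 hrc _) (hnn' _)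

/-- the extended-real-valued expectation of
`exp(a (⟨x,x'⟩/√n)² + Σ_ℓ (b_ℓ/2)(⟨x_ℓ,x'_ℓ⟩/√n)²)` is dominated by the corresponding
Gaussian expectation with `U, V_ℓ = ρ²U + √(1-ρ⁴)W_ℓ`. -/
theorem bernoulli_gaussian_exp_comparison
    (n L : ℕ) (hn : 1 ≤ n) (hL : 1 ≤ L) (ρ : ℝ) (hρ : ρ ∈ Set.Ioc (0 : ℝ) 1)
    (a : ℝ) (ha : 0 ≤ a) (b : Fin L → ℝ) (hb : ∀ ℓ, 0 ≤ b ℓ) :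
    (∫⁻ ω, ENNReal.ofReal (Real.exp
        (a * ((∑ i, ω.1.1 i * ω.1.2 i) / Real.sqrt n) ^ 2 +
          ∑ ℓ, (b ℓ / 2) *
            ((∑ i, (ω.1.1 i * ω.2.1 ℓ i) * (ω.1.2 i * ω.2.2 ℓ i)) / Real.sqrt n) ^ 2))
        ∂(radSpace n L ρ)) ≤
      ∫⁻ g, ENNReal.ofReal (Real.exp
        (a * (g 0) ^ 2 +
          ∑ ℓ : Fin L, (b ℓ / 2) * (ρ ^ 2 * g 0 + Real.sqrt (1 - ρ ^ 4) * g ℓ.succ) ^ 2))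
        ∂(gaussSpace L) := by

  obtain ⟨h0, h1⟩ := hρ
  have hρ4 : ρ ^ 4 ≤ 1 := pow_le_one₀ h0.le h1
  let r : NNReal := ⟨ρ ^ 2, by positivity⟩
  let c : NNReal := ⟨√(1 - ρ ^ 4), Real.sqrt_nonneg _⟩
  have hr : (r : ℝ) = ρ ^ 2 := rfl
  have hc : (c : ℝ) = √(1 - ρ ^ 4) := rfl
  have hrc : (r : ℝ) ^ 2 + (c : ℝ) ^ 2 = 1 := by
    rw [hr, hc, Real.sq_sqrt (by linarith)]
    ring
  let N : NNReal := (NNReal.sqrt n)⁻¹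
  have hN : (N : ℝ) = (√n)⁻¹ := by simp [N]
  -- `S` sums over the coordinates `i`; `T` forms `(U, V_1, …, V_L)` from `(U, W_1, …, W_L)`.
  let S : Fin (L + 1) → MvPolynomial (Fin n × Fin (L + 1)) NNReal := fun s =>
    ∑ i, MvPolynomial.C N * MvPolynomial.X (i, s)
  let T : Fin (L + 1) → MvPolynomial (Fin (L + 1)) NNReal :=
    Fin.cons (MvPolynomial.X 0) fun ℓ =>
      MvPolynomial.C r * MvPolynomial.X 0 + MvPolynomial.C c * MvPolynomial.X ℓ.succ
  have hA := (radVec_dom_signVec n L h0.le h1 r c hr hrc).comp S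
  have hB := (signSum_dom_gauss hn L).comp T
  have hmid : (fun (ω : (Fin n → ℝ) × (Fin L → Fin n → ℝ)) (s : Fin (L + 1)) =>
      MvPolynomial.aeval (signVec n L r c ω) (S s)) =
      fun ω s => MvPolynomial.aeval (Fin.cons (∑ i, (√n)⁻¹ * ω.1 i)
        (fun ℓ => ∑ i, (√n)⁻¹ * ω.2 ℓ i) : Fin (L + 1) → ℝ) (T s) := by
    funext ω s
    refine Fin.cases ?_ (fun ℓ => ?_) s
    · simp [S, T, signVec, NNReal.algebraMap_eq_coe, hN]
    · simp only [S, T, signVec, NNReal.algebraMap_eq_coe, hN, map_sum, map_mul, map_add,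
        MvPolynomial.aeval_C, MvPolynomial.aeval_X, Fin.cons_succ, Fin.cons_zero,
        Finset.mul_sum, ← Finset.sum_add_distrib]
      exact Finset.sum_congr rfl fun i _ => by ring
  rw [hmid] at hA
  have hdom := hA.trans hB
  let b' : Fin L → NNReal := fun ℓ => ⟨b ℓ / 2, by have := hb ℓ; positivity⟩
  let a' : NNReal := ⟨a, ha⟩
  have ha' : (a' : ℝ) = a := rfl
  have hb' : ∀ ℓ, (b' ℓ : ℝ) = b ℓ / 2 := fun _ => rfl
  let Q : MvPolynomial (Fin (L + 1)) NNReal :=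
    MvPolynomial.C a' * MvPolynomial.X 0 ^ 2 +
      ∑ ℓ, MvPolynomial.C (b' ℓ) * MvPolynomial.X ℓ.succ ^ 2
  have hQ : ∀ v : Fin (L + 1) → ℝ, MvPolynomial.aeval v Q =
      a * v 0 ^ 2 + ∑ ℓ : Fin L, (b ℓ / 2) * v ℓ.succ ^ 2 := by
    intro v
    simp [Q, NNReal.algebraMap_eq_coe, ha', hb']
  have hfin := hdom.lintegral_exp_le Q fun v => by
    rw [hQ]
    exact add_nonneg (by positivity) (Finset.sum_nonneg fun ℓ _ =>
      mul_nonneg (by have := hb ℓ; positivity) (sq_nonneg _))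
  simp only [hQ] at hfin
  refine le_of_eq_of_le ?_ (hfin.trans_eq ?_)
  · refine lintegral_congr fun ω => ?_
    simp [S, radVec, NNReal.algebraMap_eq_coe, hN, ← Finset.mul_sum, div_eq_inv_mul]
  · refine lintegral_congr fun g => ?_
    simp [T, NNReal.algebraMap_eq_coe, hr, hc]
end

section
/- With the correlated Rademacher vectors x, x′, x_1,…,x_L, x′_1,…,x′_L as in the context, let a ≥ 0 and b_1, …, b_L ≥ 0 satisfy (1−ρ⁴)·b_ℓ < 1 for every 1 ≤ ℓ ≤ L and 2a + Σ_{ℓ=1}^L ρ⁴·b_ℓ/(1−(1−ρ⁴)·b_ℓ) < 1. Then for every n ≥ 1, E[exp(a·(⟨x,x′⟩/√n)² + Σ_{ℓ=1}^L (b_ℓ/2)·(⟨x_ℓ,x′_ℓ⟩/√n)²)] ≤ (1 − 2a − Σ_{ℓ=1}^L ρ⁴·b_ℓ/(1−(1−ρ⁴)·b_ℓ))^{−1/2} · ∏_{ℓ=1}^L (1−(1−ρ⁴)·b_ℓ)^{−1/2}; in particular this bound is uniform in n. -/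
/-!
The vector `v = (y, y w_1, …, y w_L)`, with `y = x(i) x'(i)` a fair sign and `w_ℓ = z_ℓ(i) z'_ℓ(i)`
signs of mean `ρ²`, has the covariance of `(G_0, …, G_L)`, where `G_0` is standard Gaussian and
`G_ℓ = ρ² G_0 + √(1 - ρ⁴) H_ℓ`. The right-hand side of the theorem is exactly
`E exp(a G_0² + ∑ b_ℓ G_ℓ² / 2)`, so the claim compares normalized sums of copies of `v` with
their Gaussian limit. Treating `y` as `y w_0` with `w_0` of mean `1` puts all coordinates on the
same footing: the index set is `Option (Fin L)`, the means are `r` and the weights are `β`.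

Linearizing the squares with independent standard Gaussians `g_j` turns the left-hand side into
`E_g F(t)^n`, where `t_j = √(β_j / n) g_j` and `F = overlapMgf r` is the moment generating function
of `v` (`lintegral_exp_overlap`). The pointwise bound `F ≤ exp Q`, with `Q` half the covariance form,
fails in general, but it holds coefficientwise: `exp Q - F` has nonnegative Taylor coefficients.
As the law of `g` is invariant under sign flips, only the average over all sign changes
of `t` matters, and this average is nonnegative on functions with nonnegative coefficients.

For fixed `t` this is carried out on the finite cube of signs: `signCone t` is the closed semiring
generated by the nonnegative constants and the functions `ε ↦ ε_j t_j`. With `s_j = r_j ε_j t_j`,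
the function `F` is the even part of a product of factors dominated by
`exp (t_j² / 2) * (1 + s_j)`, and the even part of `∏ (1 + s_j)` is dominated by
`exp (∑_{i<j} s_i s_j)`, by induction on the number of factors together with the bound
`(∑ s_j) * exp (∑_{i<j} s_i s_j)` for the odd part (`sum_overlapMgf_pow_le`). It remains to compute
`E_g exp Q(√β g)`, by one more linearization (`lintegral_exp_form_gaussian`).
-/

open MeasureTheory ProbabilityTheory

section

variable {ι : Type*}

/-! ### Coefficientwise domination on the sign cube -/

/-- The closed (for pointwise convergence) semiring of functions of a sign vector `ε` generated by
the nonnegative constants and the functions `ε ↦ ε j * t j`. It contains `ε ↦ f (ε * t)` for every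
entire `f` with nonnegative Taylor coefficients; `g - f ∈ signCone t` plays the role of
coefficientwise domination of `f` by `g`. -/
def signCone (t : ι → ℝ) : Subsemiring ((ι → ℤˣ) → ℝ) :=
  (Subsemiring.closure
    ({f | ∃ c : ℝ, 0 ≤ c ∧ f = fun _ => c} ∪
      Set.range fun j => fun ε : ι → ℤˣ => ((ε j : ℤ) : ℝ) * t j)).topologicalClosure

lemma const_mem_signCone (t : ι → ℝ) {c : ℝ} (hc : 0 ≤ c) :
    (fun _ => c) ∈ signCone t :=
  Subsemiring.le_topologicalClosure _ (Subsemiring.subset_closure (Or.inl ⟨c, hc, rfl⟩))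

lemma coord_mem_signCone (t : ι → ℝ) (j : ι) :
    (fun ε : ι → ℤˣ => ((ε j : ℤ) : ℝ) * t j) ∈ signCone t :=
  Subsemiring.le_topologicalClosure _ (Subsemiring.subset_closure (Or.inr ⟨j, rfl⟩))

/-- The sum over signs of a monomial in the `ε j * t j` vanishes unless all exponents are even. -/
lemma sum_nonneg_of_mem_signCone [Fintype ι] [DecidableEq ι] (t : ι → ℝ)
    {f : (ι → ℤˣ) → ℝ} (hf : f ∈ signCone t) :
    0 ≤ ∑ ε, f ε := by
  have hclosed : IsClosed {f : (ι → ℤˣ) → ℝ | 0 ≤ ∑ ε, f ε} :=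
    isClosed_le continuous_const (by fun_prop)
  refine closure_minimal ?_ hclosed hf
  intro g hg
  rw [SetLike.mem_coe, Subsemiring.mem_closure_iff] at hg
  induction hg using AddSubmonoid.closure_induction with
  | zero => simp
  | add x y _ _ hx hy =>
    simp only [Set.mem_ofPred_eq, Pi.add_apply, Finset.sum_add_distrib] at *
    exact add_nonneg hx hy
  | mem x hx =>
    have key : ∃ (c : ℝ) (m : ι → ℕ), 0 ≤ c ∧
        x = fun ε => c * ∏ j, (((ε j : ℤ) : ℝ) * t j) ^ m j := by
      refine Submonoid.closure_induction (fun y hy => ?_) ?_ ?_ hx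
      · rcases hy with ⟨c, hc, rfl⟩ | ⟨j, rfl⟩
        · exact ⟨c, 0, hc, by simp⟩
        · refine ⟨1, Pi.single j 1, zero_le_one, ?_⟩
          funext ε
          rw [one_mul, Finset.prod_eq_single j]
          · simp
          · intro k _ hk
            simp [Pi.single_eq_of_ne hk]
          · simp
      · exact ⟨1, 0, zero_le_one, by funext; simp⟩
      · rintro _ _ _ _ ⟨c, m, hc, rfl⟩ ⟨c', m', hc', rfl⟩
        refine ⟨c * c', m + m', mul_nonneg hc hc', ?_⟩
        funext ε
        simp only [Pi.mul_apply, Pi.add_apply, pow_add, Finset.prod_mul_distrib]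
        ring
    obtain ⟨c, m, hc, rfl⟩ := key
    have hfac : ∑ ε : ι → ℤˣ, ∏ j, (((ε j : ℤ) : ℝ) * t j) ^ m j =
        ∏ j, ∑ e : ℤˣ, (((e : ℤ) : ℝ) * t j) ^ m j := by
      rw [Finset.prod_univ_sum, Fintype.piFinset_univ]
    simp only [Set.mem_ofPred_eq]
    rw [← Finset.mul_sum, hfac]
    refine mul_nonneg hc (Finset.prod_nonneg fun j _ => ?_)
    have hu : (Finset.univ : Finset ℤˣ) = {1, -1} := rfl
    rw [hu, Finset.sum_pair (by decide)]
    rcases Nat.even_or_odd (m j) with h | h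
    · have := h.pow_nonneg (t j)
      simp [h.neg_pow, this]
    · simp [h.neg_pow]

/-- The tails of the exponential series of a cone element are limits of cone elements. -/
lemma tail_exp_mem (t : ι → ℝ) {f : (ι → ℤˣ) → ℝ} (hf : f ∈ signCone t) (k : ℕ) :
    (fun ε => Real.exp (f ε) - ∑ i ∈ Finset.range k, f ε ^ i / i.factorial) ∈ signCone t := by
  have hlim : Filter.Tendsto
      (fun N : ℕ => fun ε => ∑ i ∈ Finset.range N, f ε ^ (i + k) / (i + k).factorial) Filter.atTop
      (nhds fun ε => Real.exp (f ε) - ∑ i ∈ Finset.range k, f ε ^ i / i.factorial) := by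
    rw [tendsto_pi_nhds]
    intro ε
    have h := NormedSpace.expSeries_div_hasSum_exp (𝔸 := ℝ) (f ε)
    rw [← Real.exp_eq_exp_ℝ] at h
    exact ((hasSum_nat_add_iff' k).2 h).tendsto_sum_nat
  refine (Subsemiring.isClosed_topologicalClosure _).mem_of_tendsto hlim
    (Filter.Eventually.of_forall fun N => ?_)
  have : (fun ε => ∑ i ∈ Finset.range N, f ε ^ (i + k) / (i + k).factorial) =
      ∑ i ∈ Finset.range N, f ^ (i + k) * (fun _ => ((i + k).factorial : ℝ)⁻¹) := by
    funext ε
    simp [div_eq_mul_inv]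
  rw [this]
  exact sum_mem fun i _ => mul_mem (pow_mem hf _) (const_mem_signCone t (by positivity))

lemma exp_mem (t : ι → ℝ)
    {f : (ι → ℤˣ) → ℝ} (hf : f ∈ signCone t) :
    (fun ε => Real.exp (f ε)) ∈ signCone t := by
  simpa using tail_exp_mem t hf 0

lemma exp_sub_one_mem (t : ι → ℝ)
    {f : (ι → ℤˣ) → ℝ} (hf : f ∈ signCone t) :
    (fun ε => Real.exp (f ε) - 1) ∈ signCone t := by
  simpa using tail_exp_mem t hf 1

lemma exp_sub_one_sub_mem (t : ι → ℝ)
    {f : (ι → ℤˣ) → ℝ} (hf : f ∈ signCone t) :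
    (fun ε => Real.exp (f ε) - (1 + f ε)) ∈ signCone t := by
  simpa [Finset.sum_range_succ] using tail_exp_mem t hf 2

/-- The factor `c` is `sinh t / t`, with the value `1` at `t = 0`. -/
lemma exists_sinh_eq (t : ℝ) : ∃ c : ℝ, 0 ≤ c ∧ c ≤ Real.exp (t ^ 2 / 2) ∧
    Real.sinh t = t * c := by
  rcases eq_or_ne t 0 with rfl | ht
  · exact ⟨1, by simp⟩
  have h1 := (Real.hasSum_sinh t).div_const t
  have h2 := Real.hasSum_cosh t
  have hterm : ∀ n : ℕ, t ^ (2 * n + 1) / (2 * n + 1).factorial / t =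
      t ^ (2 * n) / (2 * n + 1).factorial := fun n => by
    rw [pow_succ]
    field_simp
  have hev : ∀ n : ℕ, 0 ≤ t ^ (2 * n) := fun n => (even_two_mul n).pow_nonneg t
  refine ⟨Real.sinh t / t, ?_, ?_, by field_simp⟩
  · refine h1.nonneg fun n => ?_
    rw [hterm]
    exact div_nonneg (hev n) (by positivity)
  · refine (hasSum_le (fun n => ?_) h1 h2).trans (Real.cosh_le_exp_half_sq t)
    rw [hterm]
    have := hev n
    gcongr
    omega

/-- The moment generating function at `t` of `(y * w j)_j`, where `y` is a fair sign and the `w j`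
are signs of mean `r j`, all independent. -/
noncomputable def overlapMgf [Fintype ι] (r t : ι → ℝ) : ℝ :=
  (∏ j, (Real.cosh (t j) + r j * Real.sinh (t j)) +
    ∏ j, (Real.cosh (t j) - r j * Real.sinh (t j))) / 2

/-- Averaged over the signs of `t`, the `n`-th power of the moment generating function is at most
that of a centred Gaussian vector with the same covariance. -/
lemma sum_overlapMgf_pow_le [Fintype ι] [DecidableEq ι] (r t : ι → ℝ) (hr : ∀ j, 0 ≤ r j) (n : ℕ) :
    ∑ ε : ι → ℤˣ, overlapMgf r (fun j => ((ε j : ℤ) : ℝ) * t j) ^ n ≤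
      ∑ ε : ι → ℤˣ, Real.exp (n * (((∑ j, r j * (((ε j : ℤ) : ℝ) * t j)) ^ 2 +
        ∑ j, (1 - r j ^ 2) * (((ε j : ℤ) : ℝ) * t j) ^ 2) / 2)) := by
  choose c hc0 hc1 hc2 using fun j => exists_sinh_eq (t j)
  set K := signCone t with hK
  let s : ι → (ι → ℤˣ) → ℝ := fun j ε => r j * (((ε j : ℤ) : ℝ) * t j)
  have hs : ∀ j, s j ∈ K := fun j =>
    mul_mem (const_mem_signCone t (hr j)) (coord_mem_signCone t j)
  let ch : ι → ℝ := fun j => Real.cosh (t j)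
  let C : ι → ℝ := fun j => Real.exp (t j ^ 2 / 2)
  have hch0 : ∀ j, 0 ≤ ch j := fun j => (Real.cosh_pos _).le
  have hC0 : ∀ j, 0 ≤ C j := fun j => (Real.exp_pos _).le
  have hch1 : ∀ j, ch j ≤ C j := fun j => Real.cosh_le_exp_half_sq _
  -- Even and odd parts, in the variables `s`, of the product over `T` of `ch j + c j * s j`.
  let Pe : Finset ι → (ι → ℤˣ) → ℝ := fun T ε =>
    (∏ j ∈ T, (ch j + c j * s j ε) + ∏ j ∈ T, (ch j - c j * s j ε)) / 2
  let Po : Finset ι → (ι → ℤˣ) → ℝ := fun T ε =>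
    (∏ j ∈ T, (ch j + c j * s j ε) - ∏ j ∈ T, (ch j - c j * s j ε)) / 2
  -- First two elementary symmetric polynomials of the `s j`, `j ∈ T`.
  let e1 : Finset ι → (ι → ℤˣ) → ℝ := fun T ε => ∑ j ∈ T, s j ε
  let e2 : Finset ι → (ι → ℤˣ) → ℝ := fun T ε =>
    ((∑ j ∈ T, s j ε) ^ 2 - ∑ j ∈ T, s j ε ^ 2) / 2
  let X : Finset ι → (ι → ℤˣ) → ℝ := fun T ε => (∏ j ∈ T, C j) * Real.exp (e2 T ε)
  have he1 : ∀ T, e1 T ∈ K := fun T => by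
    have : e1 T = ∑ j ∈ T, s j := by funext ε; simp [e1]
    rw [this]
    exact sum_mem fun j _ => hs j
  have he2_insert : ∀ j T, j ∉ T → e2 (insert j T) = e2 T + s j * e1 T := by
    intro j T hj
    funext ε
    simp only [e1, e2, Finset.sum_insert hj, Pi.add_apply, Pi.mul_apply]
    ring
  have main : ∀ T : Finset ι, e2 T ∈ K ∧ Pe T ∈ K ∧ Po T ∈ K ∧
      X T - Pe T ∈ K ∧ e1 T * X T - Po T ∈ K := by
    intro T
    induction T using Finset.induction_on with
    | empty =>
      have h0 : e2 ∅ = 0 := by funext ε; simp [e2]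
      have h1 : Pe ∅ = 1 := by funext ε; simp [Pe]
      have h2 : Po ∅ = 0 := by funext ε; simp [Po]
      have h3 : X ∅ = 1 := by funext ε; simp [X, h0]
      have h4 : e1 ∅ = 0 := by funext ε; simp [e1]
      simp [h0, h1, h2, h3, h4]
    | insert j T hj ih =>
      obtain ⟨i1, i2, i3, i4, i5⟩ := ih
      have hse := mul_mem (hs j) (he1 T)
      have cC := const_mem_signCone t (hC0 j)
      have cch := const_mem_signCone t (hch0 j)
      have cc := const_mem_signCone t (hc0 j)
      have cCch := const_mem_signCone t (sub_nonneg.2 (hch1 j))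
      have cCc := const_mem_signCone t (sub_nonneg.2 (hc1 j))
      have hX : X T ∈ K := by
        have := add_mem i4 i2
        rwa [sub_add_cancel] at this
      have hXe : e1 T * X T ∈ K := mul_mem (he1 T) hX
      have hPe : Pe (insert j T) = (fun _ => ch j) * Pe T + (fun _ => c j) * s j * Po T := by
        funext ε
        simp only [Pe, Po, Finset.prod_insert hj, Pi.add_apply, Pi.mul_apply]
        ring
      have hPo : Po (insert j T) = (fun _ => ch j) * Po T + (fun _ => c j) * s j * Pe T := by
        funext ε
        simp only [Pe, Po, Finset.prod_insert hj, Pi.add_apply, Pi.mul_apply]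
        ring
      have he1' : e1 (insert j T) = s j + e1 T := by
        funext ε
        simp only [e1, Finset.sum_insert hj, Pi.add_apply]
      have hX' : X (insert j T) =
          (fun _ => C j) * X T * fun ε => Real.exp ((s j * e1 T) ε) := by
        funext ε
        simp only [X, he2_insert j T hj, Finset.prod_insert hj, Pi.add_apply, Pi.mul_apply,
          Real.exp_add]
        ring
      refine ⟨?_, ?_, ?_, ?_, ?_⟩
      · rw [he2_insert j T hj]
        exact add_mem i1 hse
      · rw [hPe]
        exact add_mem (mul_mem cch i2) (mul_mem (mul_mem cc (hs j)) i3)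
      · rw [hPo]
        exact add_mem (mul_mem cch i3) (mul_mem (mul_mem cc (hs j)) i2)
      -- Domination of the even part, from `exp u ≥ 1 + u` in the cone order, `u = s j * e1 T`.
      · have : X (insert j T) - Pe (insert j T) =
            (fun _ => C j) * X T * (fun ε => Real.exp ((s j * e1 T) ε) - (1 + (s j * e1 T) ε)) +
            ((fun _ => C j - ch j) * X T + (fun _ => ch j) * (X T - Pe T)) +
            ((fun _ => C j - c j) * (s j * (e1 T * X T)) +
              (fun _ => c j) * s j * (e1 T * X T - Po T)) := by
          rw [hX', hPe]
          funext ε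
          simp only [Pi.add_apply, Pi.mul_apply, Pi.sub_apply]
          ring
        rw [this]
        exact add_mem (add_mem (mul_mem (mul_mem cC hX) (exp_sub_one_sub_mem t hse))
          (add_mem (mul_mem cCch hX) (mul_mem cch i4)))
          (add_mem (mul_mem cCc (mul_mem (hs j) hXe)) (mul_mem (mul_mem cc (hs j)) i5))
      -- Domination of the odd part, from `exp u ≥ 1` in the cone order.
      · have : e1 (insert j T) * X (insert j T) - Po (insert j T) =
            (fun _ => C j) * (s j + e1 T) * X T * (fun ε => Real.exp ((s j * e1 T) ε) - 1) +
            ((fun _ => C j - ch j) * (e1 T * X T) + (fun _ => ch j) * (e1 T * X T - Po T)) +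
            ((fun _ => C j - c j) * (s j * X T) +
              (fun _ => c j) * s j * (X T - Pe T)) := by
          rw [hX', hPo, he1']
          funext ε
          simp only [Pi.add_apply, Pi.mul_apply, Pi.sub_apply]
          ring
        rw [this]
        exact add_mem (add_mem (mul_mem (mul_mem (mul_mem cC (add_mem (hs j) (he1 T))) hX)
          (exp_sub_one_mem t hse))
          (add_mem (mul_mem cCch hXe) (mul_mem cch i5)))
          (add_mem (mul_mem cCc (mul_mem (hs j) hX)) (mul_mem (mul_mem cc (hs j)) i4))
  obtain ⟨-, m2, -, m4, -⟩ := main Finset.univ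
  have hXmem : X Finset.univ ∈ K := by
    have := add_mem m4 m2
    rwa [sub_add_cancel] at this
  have hpow : ∀ m : ℕ, X Finset.univ ^ m - Pe Finset.univ ^ m ∈ K := by
    intro m
    induction m with
    | zero => simp
    | succ m ih =>
      have : X Finset.univ ^ (m + 1) - Pe Finset.univ ^ (m + 1) =
          X Finset.univ ^ m * (X Finset.univ - Pe Finset.univ) +
          (X Finset.univ ^ m - Pe Finset.univ ^ m) * Pe Finset.univ := by ring
      rw [this]
      exact add_mem (mul_mem (pow_mem hXmem m) m4) (mul_mem ih m2)
  have hfin := sum_nonneg_of_mem_signCone t (hpow n)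
  simp only [Pi.sub_apply, Pi.pow_apply, Finset.sum_sub_distrib, sub_nonneg] at hfin
  have hsq : ∀ (ε : ι → ℤˣ) j, (((ε j : ℤ) : ℝ) * t j) ^ 2 = t j ^ 2 := by
    intro ε j
    rcases Int.units_eq_one_or (ε j) with h | h <;> simp [h]
  refine le_of_eq_of_le (Finset.sum_congr rfl fun ε _ => ?_)
    (hfin.trans_eq (Finset.sum_congr rfl fun ε _ => ?_))
  · have h1 : ∀ j, Real.cosh (((ε j : ℤ) : ℝ) * t j) = ch j := by
      intro j
      rcases Int.units_eq_one_or (ε j) with h | h <;> simp [h, ch]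
    have h2 : ∀ j, r j * Real.sinh (((ε j : ℤ) : ℝ) * t j) = c j * s j ε := by
      intro j
      rcases Int.units_eq_one_or (ε j) with h | h <;> simp [h, s, hc2] <;> ring
    simp only [overlapMgf, Pe, h1, h2]
  · simp only [X, C, e2]
    rw [← Real.exp_sum, ← Real.exp_add, ← Real.exp_nat_mul]
    congr 2
    simp only [s, mul_pow (r _), hsq, sub_mul, one_mul, Finset.sum_sub_distrib, ← Finset.sum_div]
    ring

/-! ### Gaussian integrals -/

lemma lintegral_pi_prod [Fintype ι] {E : ι → Type*} [∀ i, MeasurableSpace (E i)]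
    (μ : ∀ i, Measure (E i)) [∀ i, IsProbabilityMeasure (μ i)]
    {f : ∀ i, E i → ENNReal} (hf : ∀ i, Measurable (f i)) :
    ∫⁻ x, ∏ i, f i (x i) ∂Measure.pi μ = ∏ i, ∫⁻ x, f i x ∂μ i := by
  have hind : iIndepFun (fun i (x : ∀ i, E i) => f i (x i)) (Measure.pi μ) :=
    iIndepFun_pi fun i => (hf i).aemeasurable
  rw [lintegral_prod_eq_prod_lintegral_of_indepFun Finset.univ _ hind
    fun i => (hf i).comp (measurable_pi_apply i)]
  exact Finset.prod_congr rfl fun i _ => (measurePreserving_eval μ i).lintegral_comp (hf i)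

lemma lintegral_exp_quadratic_gaussian (c : ℝ) {κ : ℝ} (hκ : κ < 1) :
    ∫⁻ x, ENNReal.ofReal (Real.exp (c * x + κ / 2 * x ^ 2)) ∂gaussianReal 0 1 =
      ENNReal.ofReal ((1 - κ) ^ (-(1 / 2 : ℝ)) * Real.exp (c ^ 2 / (1 - κ) / 2)) := by
  have hpos : 0 < 1 - κ := sub_pos.2 hκ
  let v : NNReal := ⟨(1 - κ)⁻¹, (inv_pos.2 hpos).le⟩
  have hv : v ≠ 0 := by
    rw [← NNReal.coe_ne_zero]
    exact (inv_pos.2 hpos).ne'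
  have hvc : (v : ℝ) = (1 - κ)⁻¹ := rfl
  -- The integrand times the standard density is a multiple of the density of
  -- `N(c / (1 - κ), 1 / (1 - κ))`.
  have hdens : ∀ x : ℝ, gaussianPDFReal 0 1 x * Real.exp (c * x + κ / 2 * x ^ 2) =
      ((1 - κ) ^ (-(1 / 2 : ℝ)) * Real.exp (c ^ 2 / (1 - κ) / 2)) *
        gaussianPDFReal (c / (1 - κ)) v x := by
    intro x
    have h1 : (1 - κ) ^ (-(1 / 2 : ℝ)) = (√(1 - κ))⁻¹ := by
      rw [Real.rpow_neg hpos.le, Real.sqrt_eq_rpow]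
    have h2 : √(2 * Real.pi * (1 - κ)⁻¹) = √(2 * Real.pi) * (√(1 - κ))⁻¹ := by
      rw [Real.sqrt_mul (by positivity), Real.sqrt_inv]
    have h3 : √(1 - κ) ≠ 0 := (Real.sqrt_pos.2 hpos).ne'
    have h4 : √(2 * Real.pi) ≠ 0 := (Real.sqrt_pos.2 (by positivity)).ne'
    have h5 : -(x - 0) ^ 2 / 2 + (c * x + κ / 2 * x ^ 2) =
        c ^ 2 / (1 - κ) / 2 + -(x - c / (1 - κ)) ^ 2 / (2 * (1 - κ)⁻¹) := by
      field_simp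
      ring
    simp only [gaussianPDFReal, hvc, h1, h2, NNReal.coe_one, mul_one]
    rw [mul_assoc, ← Real.exp_add, h5, Real.exp_add]
    field_simp
  rw [gaussianReal_of_var_ne_zero _ one_ne_zero,
    lintegral_withDensity_eq_lintegral_mul _ (measurable_gaussianPDF _ _) (by fun_prop)]
  simp only [Pi.mul_apply, gaussianPDF]
  simp_rw [← ENNReal.ofReal_mul (gaussianPDFReal_nonneg _ _ _), hdens]
  have hnn : 0 ≤ (1 - κ) ^ (-(1 / 2 : ℝ)) * Real.exp (c ^ 2 / (1 - κ) / 2) := by positivity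
  simp_rw [ENNReal.ofReal_mul hnn]
  rw [lintegral_const_mul _ (by fun_prop), lintegral_gaussianPDFReal_eq_one _ hv, mul_one]

lemma lintegral_exp_mul_gaussian (c : ℝ) :
    ∫⁻ x, ENNReal.ofReal (Real.exp (c * x)) ∂gaussianReal 0 1 =
      ENNReal.ofReal (Real.exp (c ^ 2 / 2)) := by
  simpa using lintegral_exp_quadratic_gaussian c zero_lt_one

lemma ofReal_exp_sum {α : Type*} (s : Finset α) (f : α → ℝ) :
    ENNReal.ofReal (Real.exp (∑ i ∈ s, f i)) = ∏ i ∈ s, ENNReal.ofReal (Real.exp (f i)) := by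
  rw [Real.exp_sum, ENNReal.ofReal_prod_of_nonneg fun i _ => (Real.exp_pos _).le]

lemma lintegral_exp_linear_gaussian [Fintype ι] (u : ι → ℝ) :
    ∫⁻ g, ENNReal.ofReal (Real.exp (∑ j, u j * g j)) ∂(Measure.pi fun _ : ι => gaussianReal 0 1) =
      ENNReal.ofReal (Real.exp (∑ j, u j ^ 2 / 2)) := by
  simp_rw [ofReal_exp_sum]
  rw [lintegral_pi_prod (fun _ : ι => gaussianReal 0 1)
    (f := fun j x => ENNReal.ofReal (Real.exp (u j * x))) (fun j => by fun_prop)]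
  simp_rw [lintegral_exp_mul_gaussian]

/-- The Gaussian expectation of `exp Q(√β g)`: after writing `exp (u² / 2) = E_h exp (h u)` for
`u = ∑ r j √(β j) g j`, the integrals over the `g j` separate. -/
lemma lintegral_exp_form_gaussian [Fintype ι] (r β : ι → ℝ)
    (hβ : ∀ j, 0 ≤ β j) (hκ : ∀ j, (1 - r j ^ 2) * β j < 1)
    (hsum : ∑ j, r j ^ 2 * β j / (1 - (1 - r j ^ 2) * β j) < 1) :
    ∫⁻ g, ENNReal.ofReal (Real.exp (((∑ j, r j * (√(β j) * g j)) ^ 2 +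
        ∑ j, (1 - r j ^ 2) * (√(β j) * g j) ^ 2) / 2))
          ∂(Measure.pi fun _ : ι => gaussianReal 0 1) =
      ENNReal.ofReal ((1 - ∑ j, r j ^ 2 * β j / (1 - (1 - r j ^ 2) * β j)) ^ (-(1 / 2 : ℝ)) *
        ∏ j, (1 - (1 - r j ^ 2) * β j) ^ (-(1 / 2 : ℝ))) := by
  set σ := ∑ j, r j ^ 2 * β j / (1 - (1 - r j ^ 2) * β j) with hσ
  have hlin : ∀ g : ι → ℝ, ENNReal.ofReal (Real.exp (((∑ j, r j * (√(β j) * g j)) ^ 2 +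
        ∑ j, (1 - r j ^ 2) * (√(β j) * g j) ^ 2) / 2)) =
      ∫⁻ h, ∏ j, ENNReal.ofReal (Real.exp
        (r j * √(β j) * h * g j + (1 - r j ^ 2) * β j / 2 * g j ^ 2)) ∂gaussianReal 0 1 := by
    intro g
    simp_rw [← ofReal_exp_sum]
    have : ∀ h : ℝ, ∑ j, (r j * √(β j) * h * g j + (1 - r j ^ 2) * β j / 2 * g j ^ 2) =
        (∑ j, (1 - r j ^ 2) * (√(β j) * g j) ^ 2) / 2 + (∑ j, r j * (√(β j) * g j)) * h := by
      intro h
      rw [Finset.sum_div, Finset.sum_mul, ← Finset.sum_add_distrib]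
      refine Finset.sum_congr rfl fun j _ => ?_
      rw [mul_pow, Real.sq_sqrt (hβ j)]
      ring
    simp_rw [this, Real.exp_add, ENNReal.ofReal_mul (Real.exp_pos _).le]
    rw [lintegral_const_mul _ (by fun_prop), lintegral_exp_mul_gaussian,
      ← ENNReal.ofReal_mul (Real.exp_pos _).le, ← Real.exp_add]
    congr 2
    ring
  simp_rw [hlin]
  rw [lintegral_lintegral_swap (by fun_prop)]
  have hin : ∀ h : ℝ, ∫⁻ g : ι → ℝ, ∏ j, ENNReal.ofReal (Real.exp
        (r j * √(β j) * h * g j + (1 - r j ^ 2) * β j / 2 * g j ^ 2))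
          ∂(Measure.pi fun _ : ι => gaussianReal 0 1) =
      ENNReal.ofReal (∏ j, (1 - (1 - r j ^ 2) * β j) ^ (-(1 / 2 : ℝ))) *
        ENNReal.ofReal (Real.exp (0 * h + σ / 2 * h ^ 2)) := by
    intro h
    rw [lintegral_pi_prod (fun _ : ι => gaussianReal 0 1)
      (f := fun j x => ENNReal.ofReal (Real.exp
        (r j * √(β j) * h * x + (1 - r j ^ 2) * β j / 2 * x ^ 2))) (fun j => by fun_prop)]
    simp_rw [fun j => lintegral_exp_quadratic_gaussian (r j * √(β j) * h) (hκ j)]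
    have hp : ∀ j, 0 < 1 - (1 - r j ^ 2) * β j := fun j => sub_pos.2 (hκ j)
    have hnn : ∀ j, 0 ≤ (1 - (1 - r j ^ 2) * β j) ^ (-(1 / 2 : ℝ)) :=
      fun j => (Real.rpow_pos_of_pos (hp j) _).le
    rw [← ENNReal.ofReal_prod_of_nonneg (fun j _ => mul_nonneg (hnn j) (Real.exp_pos _).le),
      Finset.prod_mul_distrib, ENNReal.ofReal_mul (Finset.prod_nonneg fun j _ => hnn j),
      ← Real.exp_sum]
    congr 3
    rw [hσ, zero_mul, zero_add, Finset.sum_div, Finset.sum_mul]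
    refine Finset.sum_congr rfl fun j _ => ?_
    rw [mul_pow, mul_pow, Real.sq_sqrt (hβ j)]
    ring
  simp_rw [hin]
  rw [lintegral_const_mul _ (by fun_prop), lintegral_exp_quadratic_gaussian 0 hsum,
    ← ENNReal.ofReal_mul (Finset.prod_nonneg fun j _ =>
      (Real.rpow_pos_of_pos (sub_pos.2 (hκ j)) _).le)]
  congr 1
  simp [mul_comm]

lemma lintegral_sign_flip [Fintype ι] (ε : ι → ℤˣ) {f : (ι → ℝ) → ENNReal} (hf : Measurable f) :
    ∫⁻ g, f (fun j => ((ε j : ℤ) : ℝ) * g j) ∂(Measure.pi fun _ : ι => gaussianReal 0 1) =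
      ∫⁻ g, f g ∂(Measure.pi fun _ : ι => gaussianReal 0 1) := by
  have h1 : ∀ j, MeasurePreserving (fun x : ℝ => ((ε j : ℤ) : ℝ) * x)
      (gaussianReal 0 1) (gaussianReal 0 1) := by
    intro j
    refine ⟨by fun_prop, ?_⟩
    rcases Int.units_eq_one_or (ε j) with h | h
    · simp [h]
    · simp [h, gaussianReal_map_neg]
  exact (measurePreserving_pi _ _ h1).lintegral_comp hf

lemma cosh_add_mul_sinh_nonneg {r : ℝ} (h0 : 0 ≤ r) (h1 : r ≤ 1) (t : ℝ) :
    0 ≤ Real.cosh t + r * Real.sinh t := by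
  have h : |Real.sinh t| ≤ Real.cosh t := by
    rw [Real.abs_sinh, ← Real.cosh_abs]
    exact (Real.sinh_lt_cosh _).le
  have h' : r * |Real.sinh t| ≤ |Real.sinh t| := mul_le_of_le_one_left (abs_nonneg _) h1
  have h'' : r * -|Real.sinh t| ≤ r * Real.sinh t :=
    mul_le_mul_of_nonneg_left (neg_abs_le _) h0
  linarith

lemma cosh_sub_mul_sinh_nonneg {r : ℝ} (h0 : 0 ≤ r) (h1 : r ≤ 1) (t : ℝ) :
    0 ≤ Real.cosh t - r * Real.sinh t := by
  simpa [sub_eq_add_neg] using cosh_add_mul_sinh_nonneg h0 h1 (-t)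

lemma overlapMgf_nonneg [Fintype ι] (r t : ι → ℝ) (hr : ∀ j, 0 ≤ r j) (hr1 : ∀ j, r j ≤ 1) :
    0 ≤ overlapMgf r t :=
  div_nonneg (add_nonneg
    (Finset.prod_nonneg fun j _ => cosh_add_mul_sinh_nonneg (hr j) (hr1 j) _)
    (Finset.prod_nonneg fun j _ => cosh_sub_mul_sinh_nonneg (hr j) (hr1 j) _)) zero_le_two

/-- The bound of the theorem for the linearized left-hand side, with general means `r` and
weights `β`. -/
lemma lintegral_overlapMgf_pow_le [Fintype ι] (r β : ι → ℝ)
    (hr : ∀ j, 0 ≤ r j) (hr1 : ∀ j, r j ≤ 1)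
    (hβ : ∀ j, 0 ≤ β j) (hκ : ∀ j, (1 - r j ^ 2) * β j < 1)
    (hsum : ∑ j, r j ^ 2 * β j / (1 - (1 - r j ^ 2) * β j) < 1) (n : ℕ) (hn : 1 ≤ n) :
    ∫⁻ g, ENNReal.ofReal (overlapMgf r (fun j => √(β j) / √n * g j) ^ n)
          ∂(Measure.pi fun _ : ι => gaussianReal 0 1) ≤
      ENNReal.ofReal ((1 - ∑ j, r j ^ 2 * β j / (1 - (1 - r j ^ 2) * β j)) ^ (-(1 / 2 : ℝ)) *
        ∏ j, (1 - (1 - r j ^ 2) * β j) ^ (-(1 / 2 : ℝ))) := by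
  classical
  rw [← lintegral_exp_form_gaussian r β hβ hκ hsum]
  set π := Measure.pi fun _ : ι => gaussianReal 0 1
  let A : (ι → ℝ) → ENNReal := fun g =>
    ENNReal.ofReal (overlapMgf r (fun j => √(β j) / √n * g j) ^ n)
  let B : (ι → ℝ) → ENNReal := fun g =>
    ENNReal.ofReal (Real.exp (((∑ j, r j * (√(β j) * g j)) ^ 2 +
        ∑ j, (1 - r j ^ 2) * (√(β j) * g j) ^ 2) / 2))
  have hA : Measurable A := by
    simp only [A, overlapMgf]
    fun_prop
  have hB : Measurable B := by fun_prop
  have hn0 : (0 : ℝ) < n := by exact_mod_cast hn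
  have hpt : ∀ g : ι → ℝ, ∑ ε : ι → ℤˣ, A (fun j => ((ε j : ℤ) : ℝ) * g j) ≤
      ∑ ε : ι → ℤˣ, B (fun j => ((ε j : ℤ) : ℝ) * g j) := by
    intro g
    simp only [A, B]
    rw [← ENNReal.ofReal_sum_of_nonneg fun ε _ => pow_nonneg (overlapMgf_nonneg r _ hr hr1) n,
      ← ENNReal.ofReal_sum_of_nonneg fun ε _ => (Real.exp_pos _).le]
    refine ENNReal.ofReal_le_ofReal ?_
    have h := sum_overlapMgf_pow_le r (fun j => √(β j) / √n * g j) hr n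
    simp_rw [mul_left_comm (√(β _) / √n)]
    refine h.trans_eq (Finset.sum_congr rfl fun ε _ => ?_)
    congr 1
    have h1 : ∀ j, ((ε j : ℤ) : ℝ) * (√(β j) / √n * g j) =
        (√n)⁻¹ * (√(β j) * (((ε j : ℤ) : ℝ) * g j)) := fun j => by ring
    simp_rw [h1, mul_left_comm _ (√n)⁻¹, ← Finset.mul_sum, mul_pow (√n)⁻¹,
      mul_left_comm _ ((√n)⁻¹ ^ 2), ← Finset.mul_sum, inv_pow, Real.sq_sqrt hn0.le]
    field_simp
  have hint : ∑ ε : ι → ℤˣ, ∫⁻ g, A (fun j => ((ε j : ℤ) : ℝ) * g j) ∂π ≤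
      ∑ ε : ι → ℤˣ, ∫⁻ g, B (fun j => ((ε j : ℤ) : ℝ) * g j) ∂π := by
    rw [← lintegral_finsetSum _ fun ε _ => by fun_prop,
      ← lintegral_finsetSum _ fun ε _ => by fun_prop]
    exact lintegral_mono hpt
  simp only [π, lintegral_sign_flip _ hA, lintegral_sign_flip _ hB, Finset.sum_const,
    nsmul_eq_mul] at hint
  have hcard : ((Finset.univ : Finset (ι → ℤˣ)).card : ENNReal) ≠ 0 := by
    simp
  exact (ENNReal.mul_le_mul_iff_right hcard (ENNReal.natCast_ne_top _)).1 hint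

/-! ### The moment generating function of the overlaps -/

lemma lintegral_radMeasure (p : ℝ) (f : ℝ → ENNReal) :
    ∫⁻ x, f x ∂radMeasure p = ENNReal.ofReal p * f 1 + ENNReal.ofReal (1 - p) * f (-1) := by
  simp [radMeasure, lintegral_add_measure, lintegral_smul_measure]

lemma isProbabilityMeasure_radMeasure {p : ℝ} (h0 : 0 ≤ p) (h1 : p ≤ 1) :
    IsProbabilityMeasure (radMeasure p) := by
  refine ⟨?_⟩
  simp [radMeasure, ← ENNReal.ofReal_add h0 (sub_nonneg.2 h1)]

lemma lintegral_pi_pi_prod [Fintype ι] {E F : ι → Type*} [∀ i, MeasurableSpace (E i)]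
    [∀ i, MeasurableSpace (F i)]
    (μ : ∀ i, Measure (E i)) [∀ i, IsProbabilityMeasure (μ i)]
    (ν : ∀ i, Measure (F i)) [∀ i, IsProbabilityMeasure (ν i)]
    {f : ∀ i, E i → F i → ENNReal} (hf : ∀ i, Measurable (Function.uncurry (f i))) :
    ∫⁻ x, ∫⁻ y, ∏ i, f i (x i) (y i) ∂Measure.pi ν ∂Measure.pi μ =
      ∏ i, ∫⁻ x, ∫⁻ y, f i x y ∂ν i ∂μ i := by
  have h : ∀ x : ∀ i, E i, ∫⁻ y, ∏ i, f i (x i) (y i) ∂Measure.pi ν =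
      ∏ i, ∫⁻ y, f i (x i) y ∂ν i := fun x =>
    lintegral_pi_prod ν fun i => (hf i).of_uncurry_left
  simp_rw [h]
  exact lintegral_pi_prod μ fun i => (hf i).lintegral_prod_right'

lemma lintegral_radMeasure_sign_product {ρ : ℝ} (h0 : 0 ≤ ρ) (h1 : ρ ≤ 1) (t : ℝ) :
    ∫⁻ z, ∫⁻ z', ENNReal.ofReal (Real.exp (t * (z * z'))) ∂radMeasure ((1 + ρ) / 2)
        ∂radMeasure ((1 + ρ) / 2) =
      ENNReal.ofReal (Real.cosh t + ρ ^ 2 * Real.sinh t) := by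
  have hp : 0 ≤ (1 + ρ) / 2 := by linarith
  have hq : 0 ≤ 1 - (1 + ρ) / 2 := by linarith
  simp_rw [lintegral_radMeasure]
  simp only [← ENNReal.ofReal_mul hp, ← ENNReal.ofReal_mul hq]
  rw [← ENNReal.ofReal_add (by positivity) (by positivity),
    ← ENNReal.ofReal_add (by positivity) (by positivity),
    ← ENNReal.ofReal_mul hp, ← ENNReal.ofReal_mul hq,
    ← ENNReal.ofReal_add (by positivity) (by positivity), Real.cosh_eq, Real.sinh_eq]
  congr 1
  simp only [mul_one, mul_neg, neg_neg]
  ring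

/-- The means of the signs `w_j`: the index `none` stands for `⟨x, x'⟩`, whose sign `w` is
identically `1`, and `some ℓ` for `⟨x_ℓ, x'_ℓ⟩`. -/
def overlapCorr {L : ℕ} (ρ : ℝ) : Option (Fin L) → ℝ := fun o => o.elim 1 fun _ => ρ ^ 2

/-- The coordinates `i` are independent, and each contributes the moment generating function of
`(y, y w_1, …, y w_L)`. -/
lemma lintegral_exp_overlap (n L : ℕ) {ρ : ℝ} (h0 : 0 ≤ ρ) (h1 : ρ ≤ 1)
    (t : Option (Fin L) → ℝ) :
    ∫⁻ ω, ENNReal.ofReal (Real.exp (t none * ∑ i, ω.1.1 i * ω.1.2 i +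
        ∑ ℓ, t (some ℓ) * ∑ i, (ω.1.1 i * ω.2.1 ℓ i) * (ω.1.2 i * ω.2.2 ℓ i))) ∂(radSpace n L ρ) =
      ENNReal.ofReal (overlapMgf (overlapCorr ρ) t ^ n) := by
  have hP := isProbabilityMeasure_radMeasure (p := (1 + ρ) / 2) (by linarith) (by linarith)
  have hU := isProbabilityMeasure_radMeasure (p := 1 / 2) (by norm_num) (by norm_num)
  have hr0 : ∀ o, 0 ≤ overlapCorr (L := L) ρ o := by
    rintro (_ | ℓ) <;> simp [overlapCorr, sq_nonneg]
  have hr1 : ∀ o, overlapCorr (L := L) ρ o ≤ 1 := by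
    rintro (_ | ℓ)
    · simp [overlapCorr]
    · exact pow_le_one₀ h0 h1
  -- Contribution of one coordinate `i`, given `y = x i * x' i`.
  let H : ℝ → ENNReal := fun y => ENNReal.ofReal (Real.exp (t none * y)) *
    ∏ ℓ : Fin L, ∫⁻ z, ∫⁻ z', ENNReal.ofReal (Real.exp (t (some ℓ) * y * (z * z')))
      ∂radMeasure ((1 + ρ) / 2) ∂radMeasure ((1 + ρ) / 2)
  have hH : Measurable H := by
    simp only [H, lintegral_radMeasure]
    fun_prop
  have hinner : ∀ x x' : Fin n → ℝ,
      ∫⁻ z : Fin L → Fin n → ℝ, ∫⁻ z' : Fin L → Fin n → ℝ,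
        ENNReal.ofReal (Real.exp (t none * ∑ i, x i * x' i +
          ∑ ℓ, t (some ℓ) * ∑ i, (x i * z ℓ i) * (x' i * z' ℓ i)))
        ∂(Measure.pi fun _ => Measure.pi fun _ => radMeasure ((1 + ρ) / 2))
        ∂(Measure.pi fun _ => Measure.pi fun _ => radMeasure ((1 + ρ) / 2)) =
      ∏ i, H (x i * x' i) := by
    intro x x'
    have hsplit : ∀ z z' : Fin L → Fin n → ℝ,
        ENNReal.ofReal (Real.exp (t none * ∑ i, x i * x' i +
          ∑ ℓ, t (some ℓ) * ∑ i, (x i * z ℓ i) * (x' i * z' ℓ i))) =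
        (∏ i, ENNReal.ofReal (Real.exp (t none * (x i * x' i)))) * ∏ ℓ, ∏ i,
          ENNReal.ofReal (Real.exp (t (some ℓ) * (x i * x' i) * (z ℓ i * z' ℓ i))) := by
      intro z z'
      simp_rw [← ofReal_exp_sum]
      rw [← ENNReal.ofReal_mul (Real.exp_pos _).le, ← Real.exp_add]
      congr 2
      simp_rw [Finset.mul_sum]
      congr 1
      exact Finset.sum_congr rfl fun ℓ _ => Finset.sum_congr rfl fun i _ => by ring
    simp_rw [hsplit]
    have hm : Measurable fun q : (Fin L → Fin n → ℝ) × (Fin L → Fin n → ℝ) => ∏ ℓ, ∏ i,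
        ENNReal.ofReal (Real.exp (t (some ℓ) * (x i * x' i) * (q.1 ℓ i * q.2 ℓ i))) := by
      fun_prop
    have hmz : ∀ z : Fin L → Fin n → ℝ, Measurable fun z' : Fin L → Fin n → ℝ => ∏ ℓ, ∏ i,
        ENNReal.ofReal (Real.exp (t (some ℓ) * (x i * x' i) * (z ℓ i * z' ℓ i))) := by
      intro z
      fun_prop
    rw [lintegral_congr fun z => lintegral_const_mul _ (hmz z),
      lintegral_const_mul _ hm.lintegral_prod_right',
      lintegral_pi_pi_prod _ _ (f := fun ℓ (z z' : Fin n → ℝ) => ∏ i,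
        ENNReal.ofReal (Real.exp (t (some ℓ) * (x i * x' i) * (z i * z' i))))
        (fun ℓ => by fun_prop)]
    simp_rw [H, Finset.prod_mul_distrib]
    congr 1
    rw [Finset.prod_comm]
    refine Finset.prod_congr rfl fun ℓ _ => ?_
    exact lintegral_pi_pi_prod _ _ (f := fun i (z z' : ℝ) =>
        ENNReal.ofReal (Real.exp (t (some ℓ) * (x i * x' i) * (z * z'))))
        (fun i => by fun_prop)
  rw [radSpace, lintegral_prod _ (by fun_prop)]
  have hz : ∀ p : (Fin n → ℝ) × (Fin n → ℝ), _ := fun p =>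
    (lintegral_prod (μ := Measure.pi fun _ : Fin L => Measure.pi fun _ : Fin n =>
        radMeasure ((1 + ρ) / 2))
      (ν := Measure.pi fun _ : Fin L => Measure.pi fun _ : Fin n => radMeasure ((1 + ρ) / 2))
      (fun q : (Fin L → Fin n → ℝ) × (Fin L → Fin n → ℝ) =>
      ENNReal.ofReal (Real.exp (t none * ∑ i, p.1 i * p.2 i +
          ∑ ℓ, t (some ℓ) * ∑ i, (p.1 i * q.1 ℓ i) * (p.2 i * q.2 ℓ i))))
      (by fun_prop)).trans (hinner p.1 p.2)
  simp_rw [hz]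
  rw [lintegral_prod _ (by fun_prop),
    lintegral_pi_pi_prod _ _ (f := fun _ (x x' : ℝ) => H (x * x')) (fun i => by fun_prop)]
  have hHy : ∀ y, H y = ENNReal.ofReal
      (∏ o, (Real.cosh (t o * y) + overlapCorr ρ o * Real.sinh (t o * y))) := by
    intro y
    rw [ENNReal.ofReal_prod_of_nonneg fun o _ => cosh_add_mul_sinh_nonneg (hr0 o) (hr1 o) _,
      Fintype.prod_option]
    simp only [H, lintegral_radMeasure_sign_product h0 h1, overlapCorr, Option.elim, one_mul,
      Real.cosh_add_sinh]
  rw [Finset.prod_const, Finset.card_univ, Fintype.card_fin,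
    ENNReal.ofReal_pow (overlapMgf_nonneg _ _ hr0 hr1)]
  congr 1
  have hA : 0 ≤ ∏ o, (Real.cosh (t o) + overlapCorr ρ o * Real.sinh (t o)) :=
    Finset.prod_nonneg fun o _ => cosh_add_mul_sinh_nonneg (hr0 o) (hr1 o) _
  have hB : 0 ≤ ∏ o, (Real.cosh (t o) - overlapCorr ρ o * Real.sinh (t o)) :=
    Finset.prod_nonneg fun o _ => cosh_sub_mul_sinh_nonneg (hr0 o) (hr1 o) _
  have hhalf : (1 : ℝ) - 1 / 2 = 1 / 2 := by norm_num
  have hhalf0 : (0 : ℝ) ≤ 1 / 2 := by norm_num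
  have hH1 : H 1 = ENNReal.ofReal
      (∏ o, (Real.cosh (t o) + overlapCorr ρ o * Real.sinh (t o))) := by
    simp only [hHy, mul_one]
  have hH2 : H (-1) = ENNReal.ofReal
      (∏ o, (Real.cosh (t o) - overlapCorr ρ o * Real.sinh (t o))) := by
    simp only [hHy, mul_neg, mul_one, Real.cosh_neg, Real.sinh_neg, sub_eq_add_neg]
  simp only [lintegral_radMeasure, mul_one, mul_neg, neg_neg, hhalf, hH1, hH2]
  rw [← ENNReal.ofReal_mul hhalf0, ← ENNReal.ofReal_mul hhalf0,
    ← ENNReal.ofReal_add (by positivity) (by positivity),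
    ← ENNReal.ofReal_add (by positivity) (by positivity),
    ← ENNReal.ofReal_mul hhalf0, ← ENNReal.ofReal_mul hhalf0,
    ← ENNReal.ofReal_add (by positivity) (by positivity), overlapMgf]
  congr 1
  ring

end

/-- with `x_ℓ = x ⊙ z_ℓ` and `x'_ℓ = x' ⊙ z'_ℓ`, under the stated
conditions on `a, b_1, …, b_L` the expectation
`E[exp(a(⟨x,x'⟩/√n)² + Σ_ℓ (b_ℓ/2)(⟨x_ℓ,x'_ℓ⟩/√n)²)]` is bounded, uniformly in `n`, by
`(1 - 2a - Σ_ℓ ρ⁴b_ℓ/(1-(1-ρ⁴)b_ℓ))^{-1/2} · ∏_ℓ (1-(1-ρ⁴)b_ℓ)^{-1/2}`. -/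
theorem bernoulli_overlap_exponential_moment_bound
    (L : ℕ) (hL : 1 ≤ L) (ρ : ℝ) (hρ : ρ ∈ Set.Ioc (0 : ℝ) 1)
    (a : ℝ) (ha : 0 ≤ a) (b : Fin L → ℝ) (hb : ∀ ℓ, 0 ≤ b ℓ)
    (hb1 : ∀ ℓ, (1 - ρ ^ 4) * b ℓ < 1)
    (hsum : 2 * a + ∑ ℓ, ρ ^ 4 * b ℓ / (1 - (1 - ρ ^ 4) * b ℓ) < 1)
    (n : ℕ) (hn : 1 ≤ n) :
    (∫⁻ ω, ENNReal.ofReal (Real.exp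
        (a * ((∑ i, ω.1.1 i * ω.1.2 i) / Real.sqrt n) ^ 2 +
          ∑ ℓ, (b ℓ / 2) *
            ((∑ i, (ω.1.1 i * ω.2.1 ℓ i) * (ω.1.2 i * ω.2.2 ℓ i)) / Real.sqrt n) ^ 2))
        ∂(radSpace n L ρ)) ≤
      ENNReal.ofReal
        ((1 - 2 * a - ∑ ℓ, ρ ^ 4 * b ℓ / (1 - (1 - ρ ^ 4) * b ℓ)) ^ (-(1 / 2 : ℝ)) *
          ∏ ℓ : Fin L, (1 - (1 - ρ ^ 4) * b ℓ) ^ (-(1 / 2 : ℝ))) := by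
  have h0 : 0 ≤ ρ := hρ.1.le
  have h1 : ρ ≤ 1 := hρ.2
  have hP := isProbabilityMeasure_radMeasure (p := (1 + ρ) / 2) (by linarith) (by linarith)
  have hU := isProbabilityMeasure_radMeasure (p := 1 / 2) (by norm_num) (by norm_num)
  have hS : IsProbabilityMeasure (radSpace n L ρ) := by
    unfold radSpace
    infer_instance
  let β : Option (Fin L) → ℝ := fun o => o.elim (2 * a) b
  let r : Option (Fin L) → ℝ := overlapCorr ρ
  have hr4 : (ρ ^ 2) ^ 2 = ρ ^ 4 := by ring
  have hβ : ∀ o, 0 ≤ β o := by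
    rintro (_ | ℓ)
    · simpa [β] using ha
    · exact hb ℓ
  have hr0 : ∀ o, 0 ≤ r o := by
    rintro (_ | ℓ) <;> simp [r, overlapCorr, sq_nonneg]
  have hr1 : ∀ o, r o ≤ 1 := by
    rintro (_ | ℓ)
    · simp [r, overlapCorr]
    · exact pow_le_one₀ h0 h1
  have hκ : ∀ o, (1 - r o ^ 2) * β o < 1 := by
    rintro (_ | ℓ)
    · simp [r, overlapCorr]
    · simpa [r, β, overlapCorr, hr4] using hb1 ℓ
  have hσ : ∑ o, r o ^ 2 * β o / (1 - (1 - r o ^ 2) * β o) =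
      2 * a + ∑ ℓ, ρ ^ 4 * b ℓ / (1 - (1 - ρ ^ 4) * b ℓ) := by
    simp [Fintype.sum_option, r, β, overlapCorr, hr4]
  have hprod : ∏ o, (1 - (1 - r o ^ 2) * β o) ^ (-(1 / 2 : ℝ)) =
      ∏ ℓ : Fin L, (1 - (1 - ρ ^ 4) * b ℓ) ^ (-(1 / 2 : ℝ)) := by
    simp [Fintype.prod_option, r, β, overlapCorr, hr4]
  have hfinal := lintegral_overlapMgf_pow_le r β hr0 hr1 hβ hκ (hσ ▸ hsum) n hn
  rw [hσ, hprod, ← sub_sub] at hfinal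
  refine le_of_eq_of_le ?_ hfinal
  -- Linearization of the squares by independent standard Gaussians.
  have hlin : ∀ ω : ((Fin n → ℝ) × (Fin n → ℝ)) × ((Fin L → Fin n → ℝ) × (Fin L → Fin n → ℝ)),
      ENNReal.ofReal (Real.exp
        (a * ((∑ i, ω.1.1 i * ω.1.2 i) / Real.sqrt n) ^ 2 +
          ∑ ℓ, (b ℓ / 2) *
            ((∑ i, (ω.1.1 i * ω.2.1 ℓ i) * (ω.1.2 i * ω.2.2 ℓ i)) / Real.sqrt n) ^ 2)) =
      ∫⁻ g : Option (Fin L) → ℝ, ENNReal.ofReal (Real.exp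
        (√(β none) / √n * g none * ∑ i, ω.1.1 i * ω.1.2 i +
        ∑ ℓ, √(β (some ℓ)) / √n * g (some ℓ) *
          ∑ i, (ω.1.1 i * ω.2.1 ℓ i) * (ω.1.2 i * ω.2.2 ℓ i)))
        ∂(Measure.pi fun _ => gaussianReal 0 1) := by
    intro ω
    have h := lintegral_exp_linear_gaussian (fun o : Option (Fin L) => √(β o) / √n *
      o.elim (∑ i, ω.1.1 i * ω.1.2 i)
        (fun ℓ => ∑ i, (ω.1.1 i * ω.2.1 ℓ i) * (ω.1.2 i * ω.2.2 ℓ i)))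
    simp only [Fintype.sum_option, Option.elim, mul_right_comm _ _ (_ : ℝ)] at h
    rw [h]
    congr 2
    have hsq : ∀ o s, (√(β o) / √n * s) ^ 2 / 2 = β o / 2 * (s / √n) ^ 2 := by
      intro o s
      rw [mul_pow, div_pow, div_pow, Real.sq_sqrt (hβ o)]
      ring
    simp only [hsq]
    simp [β]
  simp_rw [hlin]
  rw [lintegral_lintegral_swap (by fun_prop)]
  exact lintegral_congr fun g => lintegral_exp_overlap n L h0 h1 fun o => √(β o) / √n * g o
end
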